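/- arXiv:1502.05127 — 2 statements merged into one kernel-verified Lean document; each statement's English description precedes it below -/
import Mathlib

section
/- If f and g both belong to K(3/5), then the function h = (f+g)/2 is injective on 𝔻 and its image h(𝔻) is starlike with respect to 0 (i.e., for every w ∈ h(𝔻) and every t ∈ [0,1], t·w ∈ h(𝔻)); that is, (f+g)/2 ∈ S*. -/
/-- The unit disk `{z : ℂ | |z| < 1}`. -/
noncomputable def unitDisk : Set ℂ := Metric.ball 0 1

/-- The extremal convex function of order `α`:
`k_α(z) = ((1-z)^(2α-1) - 1)/(1-2α)` (so that `k_α(0)=0`, `k_α'(0)=1`),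
with `k_{1/2}(z) = -log(1-z)` (principal branches). -/
noncomputable def kfun (α : ℝ) (z : ℂ) : ℂ :=
  if α = 1 / 2 then -Complex.log (1 - z)
  else ((1 - z) ^ ((2 * α - 1 : ℝ) : ℂ) - 1) / ((1 - 2 * α : ℝ) : ℂ)

/-- `h_α(z) = k_α(z)/z` for `z ≠ 0`, `h_α(0) = 1`. -/
noncomputable def hfun (α : ℝ) (z : ℂ) : ℂ :=
  if z = 0 then 1 else kfun α z / z

/-- `f ∈ K(α)`: `f` is analytic on the unit disk, normalized by `f(0)=0`, `f'(0)=1`,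
with nonvanishing derivative and `Re(1 + z f''(z)/f'(z)) > α` on the disk. -/
def IsConvexOfOrder (α : ℝ) (f : ℂ → ℂ) : Prop :=
  DifferentiableOn ℂ f unitDisk ∧ f 0 = 0 ∧ deriv f 0 = 1 ∧
    ∀ z ∈ unitDisk, deriv f z ≠ 0 ∧
      α < (1 + z * deriv (deriv f) z / deriv f z).re

/-!
Write `S = f / z + g / z`. For the average `h` of `f` and `g` we have `z h' / h = f' / S + g' / S`,
so `h` is starlike as soon as `Re (S * conj f') > 0`, and symmetrically with `g'`. By the
Marx–Strohhäcker theorem, `f'` and `g'` are subordinate to `(1 - z) ^ (-2 (1 - α))`, which gives: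

* `Re (f / z * conj f') ≥ m |f'|` with `m = (2 ^ (2 α - 1) - 1) / (2 α - 1)`, since the convex curve
  `f (|z| = r)` lies on one side of its tangent at `f z`, and in particular so does the point
  `f (z f' / |f'|)`;
* `Re (g / z * conj f') ≥ -2 (1 - δ) (ν sin ν + cos ν log (cos ν)) |f'|` with
  `δ = 2 ^ (-2 (1 - α))` and `ν = (1 - α) π`: by the Poisson formula for `g' - δ`, which has
  positive real part, the ray average `g / z` of `g'` is up to constants a positive average of the
  values of `-log (1 - x) / x`, and `|arg f'| ≤ ν`.

At `α = 3 / 5` the first bound beats the second: `m > 0.74` against at most `0.73`. Injectivity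
follows from the Noshiro–Warschawski theorem for `log ∘ h ∘ exp` on the left half-plane, and
segments from `0` to `h z` are lifted within the disk of radius `|z|`.
-/

section

open Complex Set Filter Topology Metric intervalIntegral
open scoped Real ComplexConjugate InnerProductSpace

theorem deriv_nonneg_of_eventually_le_left {φ : ℝ → ℝ} {d a : ℝ} (h : HasDerivAt φ d a)
    (hle : ∀ᶠ t in 𝓝[<] a, φ t ≤ φ a) : 0 ≤ d := by
  refine ge_of_tendsto (hasDerivAt_iff_tendsto_slope_left_right.1 h).1 ?_
  filter_upwards [hle, self_mem_nhdsWithin] with t ht hta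
  rw [slope_def_field]
  exact div_nonneg_of_nonpos (sub_nonpos.2 ht) (sub_nonpos.2 (le_of_lt hta))

theorem hasDerivAt_re {F : ℝ → ℂ} {F' : ℂ} {t : ℝ} (h : HasDerivAt F F' t) :
    HasDerivAt (fun s => (F s).re) F'.re t :=
  reCLM.hasFDerivAt.comp_hasDerivAt t h

theorem hasDerivAt_im {F : ℝ → ℂ} {F' : ℂ} {t : ℝ} (h : HasDerivAt F F' t) :
    HasDerivAt (fun s => (F s).im) F'.im t :=
  imCLM.hasFDerivAt.comp_hasDerivAt t h

theorem hasDerivAt_ofReal_mul (z : ℂ) (t : ℝ) : HasDerivAt (fun s : ℝ => (s : ℂ) * z) z t := by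
  simpa using (ofRealCLM.hasDerivAt (x := t)).mul_const z

theorem hasDerivAt_mul_exp_ofReal_mul_I (z : ℂ) (t : ℝ) :
    HasDerivAt (fun s : ℝ => z * exp (s * I)) (z * exp (t * I) * I) t := by
  simpa [mul_assoc] using (hasDerivAt_ofReal_mul I t).cexp.const_mul z

section Jack

variable {w : ℂ → ℂ} {w' z₀ : ℂ}

theorem im_mul_deriv_mul_conj_eq_zero_of_norm_le (hw : HasDerivAt w w' z₀)
    (hmax : ∀ z, ‖z‖ = ‖z₀‖ → ‖w z‖ ≤ ‖w z₀‖) : (z₀ * w' * conj (w z₀)).im = 0 := by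
  have hcirc : HasDerivAt (fun θ : ℝ => w (z₀ * exp (θ * I))) (w' * (z₀ * I)) 0 :=
    HasDerivAt.comp (0 : ℝ) (by simpa using hw)
      (by simpa using hasDerivAt_mul_exp_ofReal_mul_I z₀ 0)
  have hlocmax : IsLocalMax (fun θ : ℝ => ‖w (z₀ * exp (θ * I))‖ ^ 2) 0 :=
    .of_forall fun θ => by
      simpa using pow_le_pow_left₀ (norm_nonneg _)
        (hmax (z₀ * exp (θ * I)) (by simp [norm_exp_ofReal_mul_I])) 2
  have hzero := hlocmax.hasDerivAt_eq_zero hcirc.norm_sq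
  rw [Complex.inner, show w' * (z₀ * I) * conj (w (z₀ * exp ((0 : ℝ) * I))) =
    z₀ * w' * conj (w z₀) * I by simp; ring, mul_I_re] at hzero
  linarith

theorem sq_norm_le_re_mul_deriv_mul_conj (hd : DifferentiableOn ℂ w (ball 0 ‖z₀‖)) (h0 : w 0 = 0)
    (hw : HasDerivAt w w' z₀) (hmax : ∀ z ∈ ball 0 ‖z₀‖, ‖w z‖ ≤ ‖w z₀‖) :
    ‖w z₀‖ ^ 2 ≤ (z₀ * w' * conj (w z₀)).re := by
  rcases eq_or_ne z₀ 0 with rfl | hz₀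
  · simp [h0]
  have hpos : 0 < ‖z₀‖ := norm_pos_iff.2 hz₀
  have hray : HasDerivAt (fun t : ℝ => w (t * z₀)) (w' * z₀) 1 :=
    HasDerivAt.comp (1 : ℝ) (by simpa using hw) (hasDerivAt_ofReal_mul z₀ 1)
  have hschwarz : ∀ t ∈ Ioo (0 : ℝ) 1, ‖w (t * z₀)‖ ≤ t * ‖w z₀‖ := by
    intro t ht
    have hnorm : ‖(t : ℂ) * z₀‖ = t * ‖z₀‖ := by simp [abs_of_pos ht.1]
    have hmaps : MapsTo w (ball 0 ‖z₀‖) (closedBall (w 0) ‖w z₀‖) := fun z hz => by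
      simpa [h0] using hmax z hz
    have := dist_le_div_mul_dist_of_mapsTo_ball hd hmaps (z := t * z₀)
      (by rw [mem_ball_zero_iff, hnorm]; exact mul_lt_of_lt_one_left hpos ht.2)
    rw [h0, dist_zero_right, dist_zero_right, hnorm] at this
    exact this.trans_eq (by field_simp)
  have hnonneg := deriv_nonneg_of_eventually_le_left
    (hray.norm_sq.sub (((hasDerivAt_id (1 : ℝ)).pow 2).mul_const (‖w z₀‖ ^ 2))) <| by
      filter_upwards [Ioo_mem_nhdsLT one_pos] with t ht
      have := pow_le_pow_left₀ (norm_nonneg _) (hschwarz t ht) 2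
      simp only [Pi.sub_apply, Pi.pow_apply, id, ofReal_one, one_mul]
      linarith [mul_pow t ‖w z₀‖ 2]
  simp only [Complex.inner, ofReal_one, one_mul, id, mul_comm w' z₀] at hnonneg
  norm_num at hnonneg ⊢
  linarith

/-- **Jack's lemma**. -/
theorem exists_one_le_mul_deriv_eq (hd : DifferentiableOn ℂ w (ball 0 ‖z₀‖)) (h0 : w 0 = 0)
    (hw : HasDerivAt w w' z₀) (hmax : ∀ z ∈ closedBall 0 ‖z₀‖, ‖w z‖ ≤ ‖w z₀‖) (hne : w z₀ ≠ 0) :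
    ∃ k : ℝ, 1 ≤ k ∧ z₀ * w' = k * w z₀ := by
  have him := im_mul_deriv_mul_conj_eq_zero_of_norm_le hw fun z hz => hmax z (by simp [hz])
  have hre := sq_norm_le_re_mul_deriv_mul_conj hd h0 hw fun z hz =>
    hmax z (ball_subset_closedBall hz)
  have hpos : 0 < ‖w z₀‖ ^ 2 := by positivity
  refine ⟨(z₀ * w' * conj (w z₀)).re / ‖w z₀‖ ^ 2, (one_le_div hpos).2 hre, ?_⟩
  have hreal : (((z₀ * w' * conj (w z₀)).re : ℝ) : ℂ) = z₀ * w' * conj (w z₀) :=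
    Complex.ext (by simp) (by simpa using him.symm)
  have hconj : ((‖w z₀‖ ^ 2 : ℝ) : ℂ) = w z₀ * conj (w z₀) := by
    rw [mul_conj, normSq_eq_norm_sq]
  have hconj_ne : conj (w z₀) ≠ 0 := (map_ne_zero _).2 hne
  rw [ofReal_div, hreal, hconj]
  field_simp

end Jack

theorem norm_lt_one_of_forall_mul_deriv_ne {w : ℂ → ℂ} {R : ℝ}
    (hw : DifferentiableOn ℂ w (ball 0 R)) (h0 : w 0 = 0)
    (h : ∀ z ∈ ball (0 : ℂ) R, ‖w z‖ = 1 → ∀ k : ℝ, 1 ≤ k → z * deriv w z ≠ k * w z) :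
    ∀ z ∈ ball (0 : ℂ) R, ‖w z‖ < 1 := by
  intro z₁ hz₁
  by_contra! hge
  have hsub : closedBall (0 : ℂ) ‖z₁‖ ⊆ ball 0 R := closedBall_subset_ball (by simpa using hz₁)
  have hclosed : IsClosed (closedBall (0 : ℂ) ‖z₁‖ ∩ (‖w ·‖) ⁻¹' Ici 1) :=
    (hw.continuousOn.mono hsub).norm.preimage_isClosed_of_isClosed isClosed_closedBall isClosed_Ici
  obtain ⟨z₀, ⟨hz₀, hwz₀⟩, hmin⟩ :=
    ((isCompact_closedBall _ _).of_isClosed_subset hclosed inter_subset_left).exists_isMinOn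
      ⟨z₁, by simp, hge⟩ continuous_norm.continuousOn
  have hsub₀ : closedBall (0 : ℂ) ‖z₀‖ ⊆ closedBall 0 ‖z₁‖ :=
    closedBall_subset_closedBall (by simpa using hz₀)
  have hlt : ∀ z ∈ ball (0 : ℂ) ‖z₀‖, ‖w z‖ ≤ 1 := fun z hz => by
    by_contra! hcon
    have : ‖z₀‖ ≤ ‖z‖ := hmin ⟨hsub₀ (ball_subset_closedBall hz), hcon.le⟩
    exact absurd (mem_ball_zero_iff.1 hz) this.not_gt
  have hz₀ne : z₀ ≠ 0 := by rintro rfl; norm_num [h0] at hwz₀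
  have hle : ∀ z ∈ closedBall (0 : ℂ) ‖z₀‖, ‖w z‖ ≤ 1 := by
    rw [← closure_ball (0 : ℂ) (norm_ne_zero_iff.2 hz₀ne)] at hsub₀ ⊢
    exact le_on_closure hlt (hw.continuousOn.mono (hsub₀.trans hsub)).norm continuousOn_const
  have heq : ‖w z₀‖ = 1 := le_antisymm (hle z₀ (by simp)) hwz₀
  obtain ⟨k, hk, hderiv⟩ := exists_one_le_mul_deriv_eq
    (hw.mono ((ball_subset_closedBall.trans hsub₀).trans hsub)) h0
    (hw.hasDerivAt (isOpen_ball.mem_nhds (hsub hz₀))) (by simpa only [heq] using hle)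
    (norm_ne_zero_iff.1 (by simp [heq]))
  exact h z₀ (hsub hz₀) heq k hk hderiv

section Logarithm

theorem exists_hasDerivAt_exp_eq {F : ℂ → ℂ} {c : ℂ} {R : ℝ}
    (hF : DifferentiableOn ℂ F (ball c R)) (hne : ∀ z ∈ ball c R, F z ≠ 0) :
    ∃ L : ℂ → ℂ, L c = log (F c) ∧
      ∀ z ∈ ball c R, HasDerivAt L (deriv F z / F z) z ∧ exp (L z) = F z := by
  obtain ⟨L, hLc, hL⟩ :=
    ((hF.deriv isOpen_ball).div hF hne).isExactOn_ball.with_val_at c (log (F c))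
  refine ⟨L, hLc, fun z hz => ⟨hL z hz, ?_⟩⟩
  have hc : c ∈ ball c R := mem_ball_self (pos_of_mem_ball hz)
  have hquot : ∀ y ∈ ball c R, HasDerivAt (fun y => F y * exp (-L y)) 0 y := fun y hy =>
    ((hF.hasDerivAt (isOpen_ball.mem_nhds hy)).mul (hL y hy).neg.cexp).congr_deriv (by
      have := hne y hy
      simp only [Pi.div_apply]
      field_simp
      simp)
  have hconst := isOpen_ball.is_const_of_deriv_eq_zero (convex_ball c R).isPreconnected
    (fun y hy => (hquot y hy).differentiableAt.differentiableWithinAt)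
    (fun y hy => (hquot y hy).deriv) hz hc
  simp only [hLc, exp_neg, exp_log (hne c hc), mul_inv_cancel₀ (hne c hc)] at hconst
  exact (mul_inv_eq_one₀ (exp_ne_zero _)).1 hconst |>.symm

theorem log_exp_eq_of_mem_slitPlane {L : ℂ → ℂ} {U : Set ℂ} {c z : ℂ} (hU : IsOpen U)
    (hpre : IsPreconnected U) (hL : DifferentiableOn ℂ L U)
    (hslit : ∀ y ∈ U, exp (L y) ∈ slitPlane) (hc : c ∈ U) (hLc : L c = 0) (hz : z ∈ U) :
    log (exp (L z)) = L z := by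
  refine hU.eqOn_of_deriv_eq hpre (f := fun y => log (exp (L y)))
    (hL.cexp.clog hslit) hL (fun y hy => ?_) hc (by simp [hLc]) hz
  have hLy := hL.hasDerivAt (hU.mem_nhds hy)
  rw [(hLy.cexp.clog (hslit y hy)).deriv, mul_div_cancel_left₀ _ (exp_ne_zero _)]

end Logarithm

section RightHalfPlane

variable {w Q : ℂ} {p r : ℝ}

theorem re_div_one_sub_eq_neg_half (hw : ‖w‖ = 1) (h1 : w ≠ 1) : (w / (1 - w)).re = -(1 / 2) := by
  have hsq : w.re * w.re + w.im * w.im = 1 := by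
    rw [← normSq_apply, normSq_eq_norm_sq, hw, one_pow]
  have hne : normSq (1 - w) ≠ 0 := normSq_eq_zero.not.2 (sub_ne_zero.2 h1.symm)
  rw [div_re, ← add_div, div_eq_iff hne, normSq_apply]
  simp only [sub_re, one_re, sub_im, one_im]
  linarith

theorem inv_one_add_le_re_inv_one_sub (hw : ‖w‖ ≤ r) (hr : r < 1) :
    (1 + r)⁻¹ ≤ ((1 - w)⁻¹).re := by
  have h0 : 0 ≤ r := (norm_nonneg w).trans hw
  have hre := abs_le.1 ((abs_re_le_norm w).trans hw)
  have hsq : w.re * w.re + w.im * w.im ≤ r ^ 2 := by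
    rw [← normSq_apply, normSq_eq_norm_sq]
    gcongr
  have hne : w ≠ 1 := by rintro rfl; norm_num at hw; linarith
  have hpos : 0 < normSq (1 - w) := normSq_pos.2 (sub_ne_zero.2 hne.symm)
  rw [inv_re, ← one_div, div_le_div_iff₀ (by linarith) hpos, normSq_apply]
  simp only [sub_re, one_re, sub_im, one_im]
  nlinarith

theorem cos_rpow_le_cos_mul {θ : ℝ} (hθ : |θ| ≤ π / 2) (hp₀ : 0 ≤ p) (hp₁ : p ≤ 1) :
    Real.cos θ ^ p ≤ Real.cos (θ * p) := by
  have hcos : 0 ≤ Real.cos θ := Real.cos_nonneg_of_mem_Icc (abs_le.1 hθ)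
  have hamgm := Real.geom_mean_le_arith_mean2_weighted hp₀ (sub_nonneg.2 hp₁) hcos zero_le_one
    (by ring)
  have hconcave := strictConcaveOn_cos_Icc.concaveOn.2 (abs_le.1 hθ)
    (abs_le.1 (by rw [abs_zero]; positivity)) hp₀ (sub_nonneg.2 hp₁) (by ring)
  simp only [smul_eq_mul, Real.cos_zero, mul_zero, add_zero, Real.one_rpow, mul_one]
    at hamgm hconcave
  rw [mul_comm θ]
  linarith

theorem re_rpow_le_re_cpow (hQ : 0 ≤ Q.re) (hp₀ : 0 ≤ p) (hp₁ : p ≤ 1) :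
    Q.re ^ p ≤ (Q ^ (p : ℂ)).re := by
  have harg : |Q.arg| ≤ π / 2 := abs_arg_le_pi_div_two_iff.2 hQ
  rw [cpow_ofReal_re, ← norm_mul_cos_arg Q, Real.mul_rpow (norm_nonneg Q)
    (Real.cos_nonneg_of_mem_Icc (abs_le.1 harg))]
  gcongr
  exact cos_rpow_le_cos_mul harg hp₀ hp₁

theorem cos_mul_norm_cpow_le_re (hQ : 0 ≤ Q.re) (hp₀ : 0 ≤ p) (hp₁ : p ≤ 1) :
    Real.cos (p * (π / 2)) * ‖Q ^ (p : ℂ)‖ ≤ (Q ^ (p : ℂ)).re := by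
  have harg : |Q.arg * p| ≤ p * (π / 2) := by
    rw [abs_mul, abs_of_nonneg hp₀, mul_comm]
    gcongr
    exact abs_arg_le_pi_div_two_iff.2 hQ
  rw [cpow_ofReal_re, norm_cpow_real, mul_comm, ← Real.cos_abs (Q.arg * p)]
  gcongr
  exact Real.cos_le_cos_of_nonneg_of_le_pi (abs_nonneg _) (by nlinarith [Real.pi_pos]) harg

theorem abs_im_cpow_le_sin_mul_norm (hQ : 0 ≤ Q.re) (hp₀ : 0 ≤ p) (hp₁ : p ≤ 1) :
    |(Q ^ (p : ℂ)).im| ≤ Real.sin (p * (π / 2)) * ‖Q ^ (p : ℂ)‖ := by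
  have hsin : 0 ≤ Real.sin (p * (π / 2)) :=
    Real.sin_nonneg_of_nonneg_of_le_pi (by positivity) (by nlinarith [Real.pi_pos])
  have hcos : 0 ≤ Real.cos (p * (π / 2)) :=
    Real.cos_nonneg_of_mem_Icc ⟨by nlinarith [Real.pi_pos], by nlinarith [Real.pi_pos]⟩
  refine abs_le_of_sq_le_sq ?_ (by positivity)
  have hre := pow_le_pow_left₀ (by positivity) (cos_mul_norm_cpow_le_re hQ hp₀ hp₁) 2
  nlinarith [Complex.sq_norm (Q ^ (p : ℂ)), normSq_apply (Q ^ (p : ℂ)),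
    Real.sin_sq_add_cos_sq (p * (π / 2))]

end RightHalfPlane

section RayIntegral

variable {v f : ℂ → ℂ} {z : ℂ} {R : ℝ}

theorem ofReal_mul_mem_ball {t : ℝ} (ht : t ∈ Icc (0 : ℝ) 1) (hz : z ∈ ball 0 R) :
    (t : ℂ) * z ∈ ball 0 R := by
  rw [mem_ball_zero_iff] at *
  rw [norm_mul, norm_real, Real.norm_eq_abs, abs_of_nonneg ht.1]
  exact (mul_le_of_le_one_left (norm_nonneg z) ht.2).trans_lt hz

theorem continuousOn_ray (hv : ContinuousOn v (ball 0 R)) (hz : z ∈ ball 0 R) :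
    ContinuousOn (fun t : ℝ => v (t * z)) (uIcc 0 1) :=
  hv.comp (by fun_prop) fun _ ht =>
    ofReal_mul_mem_ball (by rwa [uIcc_of_le zero_le_one] at ht) hz

theorem integral_deriv_ray_eq_div (hf : DifferentiableOn ℂ f (ball 0 R)) (h0 : f 0 = 0)
    (hz : z ∈ ball 0 R) (hz0 : z ≠ 0) : ∫ t in (0 : ℝ)..1, deriv f (t * z) = f z / z := by
  have hftc := integral_eq_sub_of_hasDerivAt (f := fun t : ℝ => f (t * z))
    (f' := fun t : ℝ => deriv f (t * z) * z) (a := 0) (b := 1)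
    (fun t ht => HasDerivAt.comp t (hf.hasDerivAt (isOpen_ball.mem_nhds
      (ofReal_mul_mem_ball (by rwa [uIcc_of_le zero_le_one] at ht) hz)))
      (hasDerivAt_ofReal_mul z t))
    ((continuousOn_ray (hf.deriv isOpen_ball).continuousOn hz).intervalIntegrable.mul_const z)
  rw [integral_mul_const] at hftc
  rw [eq_div_iff hz0, hftc]
  simp [h0]

end RayIntegral

theorem zero_mem_unitDisk : (0 : ℂ) ∈ unitDisk := mem_ball_self one_pos

namespace IsConvexOfOrder

variable {α : ℝ} {f : ℂ → ℂ} {z : ℂ}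

theorem differentiableOn (hf : IsConvexOfOrder α f) : DifferentiableOn ℂ f unitDisk := hf.1

theorem map_zero (hf : IsConvexOfOrder α f) : f 0 = 0 := hf.2.1

theorem deriv_zero (hf : IsConvexOfOrder α f) : deriv f 0 = 1 := hf.2.2.1

theorem deriv_ne_zero (hf : IsConvexOfOrder α f) (hz : z ∈ unitDisk) : deriv f z ≠ 0 :=
  (hf.2.2.2 z hz).1

theorem lt_re (hf : IsConvexOfOrder α f) (hz : z ∈ unitDisk) :
    α < (1 + z * (deriv (deriv f) z / deriv f z)).re := by
  simpa only [mul_div_assoc] using (hf.2.2.2 z hz).2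

theorem lt_one (hf : IsConvexOfOrder α f) : α < 1 := by
  simpa using hf.lt_re zero_mem_unitDisk

theorem exists_log_deriv (hf : IsConvexOfOrder α f) : ∃ L : ℂ → ℂ, L 0 = 0 ∧
    ∀ z ∈ unitDisk, HasDerivAt L (deriv (deriv f) z / deriv f z) z ∧ exp (L z) = deriv f z := by
  obtain ⟨L, hL0, hL⟩ :=
    exists_hasDerivAt_exp_eq (hf.differentiableOn.deriv isOpen_ball) fun _ => hf.deriv_ne_zero
  exact ⟨L, by rw [hL0, hf.deriv_zero, log_one], hL⟩

/-- The Marx–Strohhäcker subordination of `f'` to `(1 - z) ^ (-2 (1 - α))`, for `L = log f'`. By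
Jack's lemma the candidate Schwarz function could only reach the unit circle at a point where
`z * f'' / f' = 2 (1 - α) k * w / (1 - w)` with `k ≥ 1`, whose real part is at most `α - 1`. -/
theorem norm_one_sub_exp_le (hf : IsConvexOfOrder α f) {L : ℂ → ℂ} (hL0 : L 0 = 0)
    (hL : ∀ z ∈ unitDisk, HasDerivAt L (deriv (deriv f) z / deriv f z) z) (hz : z ∈ unitDisk) :
    ‖1 - exp (-(L z / (2 * (1 - α) : ℝ)))‖ ≤ ‖z‖ := by
  set p : ℝ := 2 * (1 - α) with hp
  have hp_pos : 0 < p := mul_pos two_pos (sub_pos.2 hf.lt_one)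
  have hp_ne : (p : ℂ) ≠ 0 := ofReal_ne_zero.2 hp_pos.ne'
  set w : ℂ → ℂ := fun z => 1 - exp (-(L z / p)) with hw
  have hw0 : w 0 = 0 := by simp [hw, hL0]
  have hw_ne : ∀ z, 1 - w z ≠ 0 := fun z => by simp [hw, exp_ne_zero]
  have hwderiv : ∀ z ∈ unitDisk,
      HasDerivAt w (deriv (deriv f) z / deriv f z / p * (1 - w z)) z := fun z hz =>
    (((hL z hz).div_const (p : ℂ)).fun_neg.cexp.const_sub 1).congr_deriv (by
      simp only [hw, sub_sub_cancel]; ring)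
  have hwdiff : DifferentiableOn ℂ w unitDisk := fun z hz =>
    (hwderiv z hz).differentiableAt.differentiableWithinAt
  have hlt : ∀ z ∈ unitDisk, ‖w z‖ < 1 := by
    refine norm_lt_one_of_forall_mul_deriv_ne hwdiff hw0 fun z hz hnorm k hk heq => ?_
    have hconv := hf.lt_re hz
    have hratio : z * (deriv (deriv f) z / deriv f z) = ((p * k : ℝ) : ℂ) * (w z / (1 - w z)) := by
      rw [(hwderiv z hz).deriv] at heq
      rw [ofReal_mul, mul_assoc, ← mul_div_assoc (k : ℂ), ← heq]
      field_simp [hw_ne z]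
    rw [hratio, add_re, re_ofReal_mul, re_div_one_sub_eq_neg_half hnorm
      (sub_ne_zero.1 (hw_ne z)).symm, one_re] at hconv
    linarith [le_mul_of_one_le_right hp_pos.le hk, hp]
  exact norm_le_norm_of_mapsTo_ball hwdiff (fun y hy => by simpa using (hlt y hy).le) hw0
    (mem_ball_zero_iff.1 hz)

theorem exists_deriv_eq_cpow (hf : IsConvexOfOrder α f) (hz : z ∈ unitDisk) :
    ∃ Q : ℂ, (1 + ‖z‖)⁻¹ ≤ Q.re ∧ deriv f z = Q ^ ((2 * (1 - α) : ℝ) : ℂ) := by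
  obtain ⟨L, hL0, hL⟩ := hf.exists_log_deriv
  set p : ℝ := 2 * (1 - α)
  have hp_ne : (p : ℂ) ≠ 0 :=
    ofReal_ne_zero.2 (mul_pos two_pos (sub_pos.2 hf.lt_one)).ne'
  have hre : ∀ y ∈ unitDisk, (1 + ‖y‖)⁻¹ ≤ (exp (L y / p)).re := fun y hy => by
    have := inv_one_add_le_re_inv_one_sub
      (hf.norm_one_sub_exp_le hL0 (fun z hz => (hL z hz).1) hy) (mem_ball_zero_iff.1 hy)
    rwa [sub_sub_cancel, ← exp_neg, neg_neg] at this
  have hlog : log (exp (L z / p)) = L z / p :=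
    log_exp_eq_of_mem_slitPlane (L := (L · / p)) isOpen_ball (convex_ball 0 1).isPreconnected
      (fun y hy => ((hL y hy).1.div_const (p : ℂ)).differentiableAt.differentiableWithinAt)
      (fun y hy => Or.inl ((by positivity : (0 : ℝ) < (1 + ‖y‖)⁻¹).trans_le (hre y hy)))
      zero_mem_unitDisk (by simp [hL0]) hz
  refine ⟨exp (L z / p), hre z hz, ?_⟩
  rw [cpow_def_of_ne_zero (exp_ne_zero _), hlog, div_mul_cancel₀ _ hp_ne, (hL z hz).2]

theorem one_add_norm_rpow_le_re_deriv (hf : IsConvexOfOrder α f) (hα : 1 / 2 ≤ α)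
    (hz : z ∈ unitDisk) : (1 + ‖z‖) ^ (-(2 * (1 - α))) ≤ (deriv f z).re := by
  obtain ⟨Q, hQ, hderiv⟩ := hf.exists_deriv_eq_cpow hz
  have hpos : (0 : ℝ) ≤ (1 + ‖z‖)⁻¹ := by positivity
  have hp : 0 ≤ 2 * (1 - α) := by linarith [hf.lt_one]
  rw [Real.rpow_neg (by positivity), ← Real.inv_rpow (by positivity), hderiv]
  exact (Real.rpow_le_rpow hpos hQ hp).trans
    (re_rpow_le_re_cpow (hpos.trans hQ) hp (by linarith))

theorem cos_mul_norm_deriv_le_re (hf : IsConvexOfOrder α f) (hα : 1 / 2 ≤ α) (hz : z ∈ unitDisk) :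
    Real.cos ((1 - α) * π) * ‖deriv f z‖ ≤ (deriv f z).re := by
  obtain ⟨Q, hQ, hderiv⟩ := hf.exists_deriv_eq_cpow hz
  rw [hderiv, show (1 - α) * π = 2 * (1 - α) * (π / 2) by ring]
  exact cos_mul_norm_cpow_le_re ((by positivity : (0 : ℝ) ≤ (1 + ‖z‖)⁻¹).trans hQ)
    (by linarith [hf.lt_one]) (by linarith)

theorem abs_im_deriv_le_sin_mul_norm (hf : IsConvexOfOrder α f) (hα : 1 / 2 ≤ α)
    (hz : z ∈ unitDisk) : |(deriv f z).im| ≤ Real.sin ((1 - α) * π) * ‖deriv f z‖ := by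
  obtain ⟨Q, hQ, hderiv⟩ := hf.exists_deriv_eq_cpow hz
  rw [hderiv, show (1 - α) * π = 2 * (1 - α) * (π / 2) by ring]
  exact abs_im_cpow_le_sin_mul_norm ((by positivity : (0 : ℝ) ≤ (1 + ‖z‖)⁻¹).trans hQ)
    (by linarith [hf.lt_one]) (by linarith)

theorem two_rpow_le_re_deriv (hf : IsConvexOfOrder α f) (hα : 1 / 2 ≤ α) (hz : z ∈ unitDisk) :
    2 ^ (-(2 * (1 - α))) ≤ (deriv f z).re := by
  refine le_trans ?_ (hf.one_add_norm_rpow_le_re_deriv hα hz)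
  have hnorm : ‖z‖ < 1 := mem_ball_zero_iff.1 hz
  exact Real.rpow_le_rpow_of_nonpos (by positivity) (by linarith) (by linarith [hf.lt_one])

theorem two_rpow_sub_one_div_le_re_div (hf : IsConvexOfOrder α f) (hα : 1 / 2 < α)
    (hz : z ∈ unitDisk) (hz0 : z ≠ 0) :
    (2 ^ (2 * α - 1) - 1) / (2 * α - 1) ≤ (f z / z).re := by
  have hcont := (hf.differentiableOn.deriv isOpen_ball).continuousOn
  have hint : ∫ t in (0 : ℝ)..1, (1 + t) ^ (-(2 * (1 - α))) =
      (2 ^ (2 * α - 1) - 1) / (2 * α - 1) := by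
    rw [integral_comp_add_left (fun x : ℝ => x ^ (-(2 * (1 - α)))) 1,
      integral_rpow (Or.inl (by linarith))]
    norm_num
    ring_nf
  have hray := continuousOn_ray hcont hz
  rw [← hint, ← integral_deriv_ray_eq_div hf.differentiableOn hf.map_zero hz hz0,
    show (∫ t in (0 : ℝ)..1, deriv f (t * z)).re = ∫ t in (0 : ℝ)..1, (deriv f (t * z)).re from
      (intervalIntegral_re hray.intervalIntegrable).symm]
  refine integral_mono_on zero_le_one (ContinuousOn.intervalIntegrable ?_)
    (continuous_re.comp_continuousOn hray).intervalIntegrable fun t ht => ?_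
  · rw [uIcc_of_le zero_le_one]
    exact ContinuousOn.rpow_const (by fun_prop) fun t ht =>
      Or.inl (add_pos_of_pos_of_nonneg one_pos ht.1).ne'
  · refine le_trans ?_ (hf.one_add_norm_rpow_le_re_deriv hα.le (ofReal_mul_mem_ball ht hz))
    have hnorm : ‖(t : ℂ) * z‖ ≤ t := by
      rw [norm_mul, norm_real, Real.norm_eq_abs, abs_of_nonneg ht.1]
      exact mul_le_of_le_one_right ht.1 (mem_ball_zero_iff.1 hz).le
    exact Real.rpow_le_rpow_of_nonpos (by positivity) (by linarith) (by linarith [hf.lt_one])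

end IsConvexOfOrder

theorem le_of_hasDerivAt_neg_mul_sin {φ n ρ : ℝ → ℝ} (hn : Monotone n) (hn0 : n 0 = 0)
    (hn2π : n (2 * π) = 2 * π) (hρ : ∀ θ, 0 ≤ ρ θ)
    (hφ : ∀ θ, HasDerivAt φ (-(ρ θ * Real.sin (n θ))) θ) (hper : φ (2 * π) = φ 0)
    {θ : ℝ} (hθ : θ ∈ Icc 0 (2 * π)) : φ θ ≤ φ 0 := by
  have hdiff : Differentiable ℝ φ := fun θ => (hφ θ).differentiableAt
  rcases le_total (n θ) π with hle | hge
  · refine antitoneOn_of_deriv_nonpos (convex_Icc 0 θ) hdiff.continuous.continuousOn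
      hdiff.differentiableOn (fun t ht => ?_) ⟨le_rfl, hθ.1⟩ ⟨hθ.1, le_rfl⟩ hθ.1
    rw [interior_Icc] at ht
    rw [(hφ t).deriv, neg_nonpos]
    exact mul_nonneg (hρ t) (Real.sin_nonneg_of_nonneg_of_le_pi (hn0 ▸ hn ht.1.le)
      ((hn ht.2.le).trans hle))
  · rw [← hper]
    refine monotoneOn_of_deriv_nonneg (convex_Icc θ (2 * π)) hdiff.continuous.continuousOn
      hdiff.differentiableOn (fun t ht => ?_) ⟨le_rfl, hθ.2⟩ ⟨hθ.2, le_rfl⟩ hθ.2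
    rw [interior_Icc] at ht
    rw [(hφ t).deriv, neg_nonneg, ← Real.sin_sub_two_pi]
    have hge' : π ≤ n t := hge.trans (hn ht.1.le)
    have hle' : n t ≤ 2 * π := (hn ht.2.le).trans_eq hn2π
    exact mul_nonpos_of_nonneg_of_nonpos (hρ t)
      (Real.sin_nonpos_of_nonpos_of_neg_pi_le (by linarith) (by linarith))

theorem exp_mul_mul_conj_mul_exp (a b z : ℂ) (θ : ℝ) :
    exp a * (z * exp (θ * I)) * conj (z * exp b) =
      ((‖z‖ ^ 2 * Real.exp (a.re + b.re) : ℝ) : ℂ) * exp ((θ + a.im - b.im : ℝ) * I) := by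
  have hexp : exp a * exp (θ * I) * conj (exp b) =
      (Real.exp (a.re + b.re) : ℂ) * exp ((θ + a.im - b.im : ℝ) * I) := by
    rw [← exp_conj, ofReal_exp, ← exp_add, ← exp_add, ← exp_add]
    congr 1
    apply Complex.ext <;> simp; ring
  have hnorm : z * conj z = ((‖z‖ ^ 2 : ℝ) : ℂ) := by rw [mul_conj, normSq_eq_norm_sq]
  rw [map_mul, ofReal_mul, ← hnorm, mul_assoc _ _ (exp ((θ + a.im - b.im : ℝ) * I)), ← hexp]
  ring

namespace IsConvexOfOrder

variable {α m : ℝ} {f : ℂ → ℂ} {z ζ : ℂ}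

/-- The curve `θ ↦ f (z * exp (θ * I))` is convex, so it stays on one side of its tangent line at
`f z`: relative to that tangent, its direction turns monotonically through a total angle `2π`. -/
theorem re_mul_conj_le_of_norm_eq (hf : IsConvexOfOrder α f) (hα : 0 ≤ α) (hz : z ∈ unitDisk)
    (hζ : ‖ζ‖ = ‖z‖) :
    (f ζ * conj (z * deriv f z)).re ≤ (f z * conj (z * deriv f z)).re := by
  rcases eq_or_ne z 0 with rfl | hz0
  · simp
  obtain ⟨L, -, hL⟩ := hf.exists_log_deriv
  set γ : ℝ → ℂ := fun θ => z * exp (θ * I) with hγ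
  have hmem : ∀ θ, γ θ ∈ unitDisk := fun θ => by
    simpa [hγ, unitDisk, norm_exp_ofReal_mul_I] using hz
  have hγ' : ∀ θ, HasDerivAt γ (γ θ * I) θ := hasDerivAt_mul_exp_ofReal_mul_I z
  set n : ℝ → ℝ := fun θ => θ + (L (γ θ)).im - (L z).im with hn
  have hn' : ∀ θ, HasDerivAt n
      (1 + γ θ * (deriv (deriv f) (γ θ) / deriv f (γ θ))).re θ := fun θ =>
    (((hasDerivAt_id θ).add (hasDerivAt_im ((hL _ (hmem θ)).1.comp θ (hγ' θ)))).sub_const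
      (L z).im).congr_deriv (by
        rw [← mul_assoc, mul_I_im, add_re, one_re, mul_comm (γ θ)])
  have hmono : Monotone n :=
    monotone_of_deriv_nonneg (fun θ => (hn' θ).differentiableAt) fun θ => by
      rw [(hn' θ).deriv]
      exact hα.trans (hf.lt_re (hmem θ)).le
  have hφ : ∀ θ, HasDerivAt (fun θ => (f (γ θ) * conj (z * deriv f z)).re)
      (-(‖z‖ ^ 2 * Real.exp ((L (γ θ)).re + (L z).re) * Real.sin (n θ))) θ := fun θ => by
    have hfγ := (hf.differentiableOn.hasDerivAt (isOpen_ball.mem_nhds (hmem θ))).comp θ (hγ' θ)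
    refine (hasDerivAt_re (hfγ.mul_const (conj (z * deriv f z)))).congr_deriv ?_
    rw [← (hL _ (hmem θ)).2, ← (hL z hz).2, show exp (L (γ θ)) * (γ θ * I) * conj (z * exp (L z)) =
      exp (L (γ θ)) * γ θ * conj (z * exp (L z)) * I by ring, exp_mul_mul_conj_mul_exp, mul_I_re,
      im_ofReal_mul, exp_ofReal_mul_I_im]
  obtain ⟨θ, hθ, heq⟩ : ζ / z ∈ circleMap 0 1 '' Ioc 0 (2 * π) := by
    rw [image_circleMap_Ioc]
    simp [hζ, hz0]
  have hγθ : γ θ = ζ := by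
    simp only [circleMap_zero, ofReal_one, one_mul] at heq
    simp only [hγ, heq, mul_div_cancel₀ _ hz0]
  have hγ0 : γ 0 = z := by simp [hγ]
  have hγ2π : γ (2 * π) = z := by simp [hγ, exp_two_pi_mul_I]
  simpa only [hγθ, hγ0] using le_of_hasDerivAt_neg_mul_sin hmono (by simp [hn, hγ0])
    (by simp [hn, hγ2π]) (fun _ => by positivity) hφ (by simp only [hγ0, hγ2π])
    (Ioc_subset_Icc_self hθ)

theorem mul_norm_deriv_le_re_div_mul_conj (hf : IsConvexOfOrder α f) (hα : 0 ≤ α)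
    (hm : ∀ ζ ∈ unitDisk, ζ ≠ 0 → m ≤ (f ζ / ζ).re) (hz : z ∈ unitDisk) (hz0 : z ≠ 0) :
    m * ‖deriv f z‖ ≤ (f z / z * conj (deriv f z)).re := by
  have hd : deriv f z ≠ 0 := hf.deriv_ne_zero hz
  set ζ : ℂ := z * (deriv f z / ‖deriv f z‖) with hζ
  have hnorm : ‖ζ‖ = ‖z‖ := by simp [hζ, hd]
  have hζ0 : ζ ≠ 0 := norm_ne_zero_iff.1 (hnorm ▸ norm_ne_zero_iff.2 hz0)
  have hcz : conj z = (‖z‖ ^ 2 : ℝ) / z := by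
    rw [← normSq_eq_norm_sq, ← mul_conj, mul_div_cancel_left₀ _ hz0]
  have hcd : conj (deriv f z) = (‖deriv f z‖ ^ 2 : ℝ) / deriv f z := by
    rw [← normSq_eq_norm_sq, ← mul_conj, mul_div_cancel_left₀ _ hd]
  have hfζ : f ζ * conj (z * deriv f z) = ((‖z‖ ^ 2 * ‖deriv f z‖ : ℝ) : ℂ) * (f ζ / ζ) := by
    have : (‖deriv f z‖ : ℂ) ≠ 0 := ofReal_ne_zero.2 (norm_ne_zero_iff.2 hd)
    rw [map_mul, hcz, hcd, show f ζ / ζ = f ζ / (z * (deriv f z / ‖deriv f z‖)) from rfl]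
    push_cast
    field_simp
  have hfz : f z * conj (z * deriv f z) = ((‖z‖ ^ 2 : ℝ) : ℂ) * (f z / z * conj (deriv f z)) := by
    rw [map_mul, hcz]
    ring
  have hsupp := hf.re_mul_conj_le_of_norm_eq hα hz hnorm
  rw [hfζ, hfz, re_ofReal_mul, re_ofReal_mul, mul_assoc] at hsupp
  have hle := le_of_mul_le_mul_left hsupp (by positivity)
  have hζm := hm ζ (by simpa [unitDisk, hnorm] using hz) hζ0
  nlinarith [norm_nonneg (deriv f z)]

end IsConvexOfOrder

section TiltPotential

variable {ν u a b : ℝ}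

/-- The function `u ↦ -Re (exp (ν * I) * log (1 + u * I))`. For `0 ≤ ν < π / 2` its maximum
over `u ≥ 0` is attained at `u = tan ν` and measures how negative
`Re (exp (ν * I) * logKernel x)` can be. -/
noncomputable def tiltPotential (ν u : ℝ) : ℝ :=
  Real.sin ν * Real.arctan u - Real.cos ν * (Real.log (1 + u ^ 2) / 2)

theorem hasDerivAt_tiltPotential (ν u : ℝ) :
    HasDerivAt (tiltPotential ν) ((Real.sin ν - u * Real.cos ν) / (1 + u ^ 2)) u := by
  have hpos : 1 + u ^ 2 ≠ 0 := by positivity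
  have hlog := ((((hasDerivAt_id u).pow 2).const_add 1).log hpos).div_const 2
  refine (((Real.hasDerivAt_arctan u).const_mul (Real.sin ν)).sub
    (hlog.const_mul (Real.cos ν))).congr_deriv ?_
  simp only [Pi.pow_apply, id]
  field_simp
  norm_num
  ring

theorem tiltPotential_nonneg (hν : 0 < Real.cos ν) (hu₀ : 0 ≤ u) (hu : u ≤ Real.tan ν) :
    0 ≤ tiltPotential ν u := by
  have hmono : MonotoneOn (tiltPotential ν) (Icc 0 u) := by
    refine monotoneOn_of_deriv_nonneg (convex_Icc 0 u)
      (fun s _ => (hasDerivAt_tiltPotential ν s).continuousAt.continuousWithinAt)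
      (fun s _ => (hasDerivAt_tiltPotential ν s).differentiableAt.differentiableWithinAt) ?_
    intro s hs
    rw [interior_Icc] at hs
    rw [(hasDerivAt_tiltPotential ν s).deriv]
    have : s * Real.cos ν ≤ Real.sin ν := by
      rw [← Real.tan_mul_cos hν.ne']
      gcongr
      exact hs.2.le.trans hu
    exact div_nonneg (sub_nonneg.2 this) (by positivity)
  simpa [tiltPotential] using hmono (left_mem_Icc.2 hu₀) (right_mem_Icc.2 hu₀) hu₀

theorem tiltPotential_tan (hν : ν ∈ Ioo (-(π / 2)) (π / 2)) :
    tiltPotential ν (Real.tan ν) = ν * Real.sin ν + Real.cos ν * Real.log (Real.cos ν) := by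
  rw [tiltPotential, Real.arctan_tan hν.1 hν.2,
    ← inv_inv (1 + Real.tan ν ^ 2), Real.inv_one_add_tan_sq (Real.cos_pos_of_mem_Ioo hν).ne',
    Real.log_inv, Real.log_pow]
  push_cast
  ring

theorem one_sub_mul_pos {t : ℝ} (ha : a < 1) (ht : t ∈ Icc (0 : ℝ) 1) : 0 < 1 - t * a := by
  nlinarith [mul_le_mul_of_nonneg_left ha.le ht.1, ht.2, mul_nonneg ht.1 (sub_nonneg.2 ha.le)]

/-- The negative of `Re (exp (ν * I) * (1 - t * x)⁻¹)` for `x = a + b * I`, whose integral over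
`0 ≤ t ≤ 1` is to be bounded above. -/
noncomputable def tiltIntegrand (ν a b t : ℝ) : ℝ :=
  (Real.sin ν * (t * b) - Real.cos ν * (1 - t * a)) / ((1 - t * a) ^ 2 + (t * b) ^ 2)

theorem hasDerivAt_tiltPotential_slope {t : ℝ} (ht : t ≠ 0) (hb : b ≠ 0) :
    HasDerivAt (fun s => -tiltPotential ν ((1 - s * a) / (s * b)))
      (tiltIntegrand ν a b t / t) t := by
  have hD : (1 - t * a) ^ 2 + (t * b) ^ 2 ≠ 0 := by positivity
  have hu := (((hasDerivAt_id t).mul_const a).const_sub 1).div ((hasDerivAt_id t).mul_const b)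
    (mul_ne_zero ht hb)
  refine ((hasDerivAt_tiltPotential ν _).comp t hu).neg.congr_deriv ?_
  simp only [Pi.div_apply, id, tiltIntegrand]
  rw [show 1 + ((1 - t * a) / (t * b)) ^ 2 = ((1 - t * a) ^ 2 + (t * b) ^ 2) / (t * b) ^ 2 by
    field_simp; ring]
  field_simp [hD]
  ring

theorem continuousOn_tiltIntegrand (ν b : ℝ) (ha : a < 1) :
    ContinuousOn (tiltIntegrand ν a b) (Icc 0 1) :=
  ContinuousOn.div (by fun_prop) (by fun_prop) fun _ ht => by
    have := one_sub_mul_pos ha ht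
    positivity

theorem integral_tiltIntegrand_le_of_eq (hν : 0 < Real.cos ν) (ha : a < 1) (hb : 0 < b)
    {t₀ : ℝ} (ht₀ : t₀ ∈ Ioc 0 1)
    (heq : Real.cos ν * (1 - t₀ * a) = Real.sin ν * (t₀ * b)) :
    ∫ t in t₀..1, tiltIntegrand ν a b t ≤ tiltPotential ν (Real.tan ν) := by
  have hsub : Icc t₀ 1 ⊆ Icc 0 1 := Icc_subset_Icc_left ht₀.1.le
  have hslope : 0 < Real.sin ν * b + Real.cos ν * a := by
    by_contra! hle
    nlinarith [mul_nonpos_of_nonneg_of_nonpos ht₀.1.le hle]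
  have hcont := (continuousOn_tiltIntegrand ν b ha).mono hsub
  have hcont_div := hcont.div continuousOn_id fun t ht => (ht₀.1.trans_le ht.1).ne'
  have hftc := integral_eq_sub_of_hasDerivAt (fun t ht => by
      rw [uIcc_of_le ht₀.2] at ht
      exact hasDerivAt_tiltPotential_slope (ν := ν) (a := a) (ht₀.1.trans_le ht.1).ne' hb.ne')
    (hcont_div.intervalIntegrable_of_Icc ht₀.2)
  have hslope_tan : (1 - t₀ * a) / (t₀ * b) = Real.tan ν := by
    rw [Real.tan_eq_sin_div_cos, div_eq_div_iff (mul_pos ht₀.1 hb).ne' hν.ne']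
    linarith
  have hend : 0 ≤ tiltPotential ν ((1 - 1 * a) / (1 * b)) := by
    refine tiltPotential_nonneg hν (div_nonneg (by linarith) (by linarith)) ?_
    rw [Real.tan_eq_sin_div_cos, div_le_div_iff₀ (by linarith) hν]
    nlinarith [ht₀.1, ht₀.2]
  calc _ ≤ ∫ t in t₀..1, tiltIntegrand ν a b t / t := by
        refine integral_mono_on ht₀.2 (hcont.intervalIntegrable_of_Icc ht₀.2)
          (hcont_div.intervalIntegrable_of_Icc ht₀.2) fun t ht => ?_
        have := one_sub_mul_pos ha (hsub ht)
        exact le_div_self (div_nonneg (by nlinarith [ht.1]) (by positivity))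
          (ht₀.1.trans_le ht.1) ht.2
    _ = tiltPotential ν (Real.tan ν) - tiltPotential ν ((1 - 1 * a) / (1 * b)) := by
        refine hftc.trans ?_
        rw [hslope_tan]
        ring
    _ ≤ tiltPotential ν (Real.tan ν) := sub_le_self _ hend

theorem integral_tiltIntegrand_nonpos (hν : 0 ≤ Real.cos ν) (ha : a < 1) {t₀ : ℝ}
    (ht₀ : t₀ ∈ Icc 0 1) (hle : Real.sin ν * (t₀ * b) ≤ Real.cos ν * (1 - t₀ * a)) :
    ∫ t in (0 : ℝ)..t₀, tiltIntegrand ν a b t ≤ 0 := by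
  rw [← neg_nonneg, ← integral_neg]
  refine integral_nonneg ht₀.1 fun t ht => ?_
  have := one_sub_mul_pos ha ⟨ht.1, ht.2.trans ht₀.2⟩
  refine neg_nonneg.2 (div_nonpos_of_nonpos_of_nonneg ?_ (by positivity))
  rcases le_total (Real.sin ν * b + Real.cos ν * a) 0 with hK | hK
  · nlinarith [mul_nonpos_of_nonneg_of_nonpos ht.1 hK]
  · nlinarith [mul_le_mul_of_nonneg_right ht.2 hK]

theorem integral_tiltIntegrand_le (hν : 0 < Real.cos ν) (hν' : 0 ≤ Real.sin ν)
    (ha : a < 1) (hb : 0 ≤ b) :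
    ∫ t in (0 : ℝ)..1, tiltIntegrand ν a b t ≤ tiltPotential ν (Real.tan ν) := by
  rcases le_or_gt (Real.sin ν * (1 * b)) (Real.cos ν * (1 - 1 * a)) with hle | hlt
  · exact (integral_tiltIntegrand_nonpos hν.le ha (right_mem_Icc.2 zero_le_one) hle).trans
      (tiltPotential_nonneg hν (Real.tan_eq_sin_div_cos ν ▸ div_nonneg hν' hν.le) le_rfl)
  have hb_pos : 0 < b := hb.lt_of_ne (by rintro rfl; nlinarith)
  have hK : Real.cos ν < Real.sin ν * b + Real.cos ν * a := by linarith
  have hK_pos := hν.trans hK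
  set t₀ := Real.cos ν / (Real.sin ν * b + Real.cos ν * a) with ht₀
  have ht₀_mem : t₀ ∈ Ioc 0 1 := ⟨div_pos hν hK_pos, (div_le_one hK_pos).2 hK.le⟩
  have heq : Real.cos ν * (1 - t₀ * a) = Real.sin ν * (t₀ * b) := by
    rw [ht₀]; field_simp; ring
  have hint : IntervalIntegrable (tiltIntegrand ν a b) MeasureTheory.volume 0 1 :=
    (continuousOn_tiltIntegrand ν b ha).intervalIntegrable_of_Icc zero_le_one
  have hmem : t₀ ∈ uIcc (0 : ℝ) 1 := by
    rw [uIcc_of_le zero_le_one]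
    exact Ioc_subset_Icc_self ht₀_mem
  rw [← integral_add_adjacent_intervals (hint.mono_set (uIcc_subset_uIcc_left hmem))
    (hint.mono_set (uIcc_subset_uIcc_right hmem))]
  linarith [integral_tiltIntegrand_nonpos hν.le ha (Ioc_subset_Icc_self ht₀_mem) heq.ge,
    integral_tiltIntegrand_le_of_eq hν ha hb_pos ht₀_mem heq]

end TiltPotential

section LogKernel

variable {x a : ℂ} {ν : ℝ}

/-- The function `-log (1 - x) / x`, written as an integral over the ray from `0` to `x`. -/
noncomputable def logKernel (x : ℂ) : ℂ := ∫ t in (0 : ℝ)..1, (1 - t * x)⁻¹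

theorem continuousOn_inv_one_sub_mul (hx : ‖x‖ < 1) :
    ContinuousOn (fun t : ℝ => (1 - t * x)⁻¹) (uIcc 0 1) := by
  rw [uIcc_of_le zero_le_one]
  refine ContinuousOn.inv₀ (by fun_prop) fun t ht h => ?_
  have := one_sub_mul_pos ((re_le_norm x).trans_lt hx) ht
  simpa [this.ne'] using congrArg re h

theorem neg_norm_mul_tiltIntegrand_le_re {t : ℝ} (hx : ‖x‖ < 1) (ht : t ∈ Icc (0 : ℝ) 1)
    (hre : Real.cos ν * ‖a‖ ≤ a.re) (him : |a.im| ≤ Real.sin ν * ‖a‖) :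
    -(‖a‖ * tiltIntegrand ν x.re |x.im| t) ≤ (a * (1 - t * x)⁻¹).re := by
  have hpos := one_sub_mul_pos ((re_le_norm x).trans_lt hx) ht
  have hD : normSq (1 - t * x) = (1 - t * x.re) ^ 2 + (t * |x.im|) ^ 2 := by
    rw [normSq_apply, mul_pow, sq_abs]
    simp only [sub_re, one_re, re_ofReal_mul, sub_im, one_im, im_ofReal_mul]
    ring
  have hmul : a.im * (t * x.im) ≤ Real.sin ν * ‖a‖ * (t * |x.im|) := by
    calc a.im * (t * x.im) ≤ |a.im| * (t * |x.im|) := by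
          simpa only [abs_mul, abs_of_nonneg ht.1] using le_abs_self (a.im * (t * x.im))
      _ ≤ Real.sin ν * ‖a‖ * (t * |x.im|) :=
          mul_le_mul_of_nonneg_right him (mul_nonneg ht.1 (abs_nonneg _))
  have hD_pos : 0 < (1 - t * x.re) ^ 2 + (t * |x.im|) ^ 2 := by positivity
  have hw : (a * (1 - t * x)⁻¹).re =
      (a.re * (1 - t * x.re) - a.im * (t * x.im)) / ((1 - t * x.re) ^ 2 + (t * |x.im|) ^ 2) := by
    rw [mul_re, inv_re, inv_im, hD]
    simp only [sub_re, one_re, re_ofReal_mul, sub_im, one_im, im_ofReal_mul]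
    ring
  rw [hw, tiltIntegrand, ← mul_div_assoc, ← neg_div]
  refine div_le_div_of_nonneg_right ?_ hD_pos.le
  nlinarith [mul_le_mul_of_nonneg_right hre hpos.le]

theorem neg_norm_mul_tiltPotential_tan_le_re_mul_logKernel (hx : ‖x‖ < 1) (hν : 0 < Real.cos ν)
    (hν' : 0 ≤ Real.sin ν) (hre : Real.cos ν * ‖a‖ ≤ a.re) (him : |a.im| ≤ Real.sin ν * ‖a‖) :
    -(‖a‖ * tiltPotential ν (Real.tan ν)) ≤ (a * logKernel x).re := by
  have hx_re : x.re < 1 := (re_le_norm x).trans_lt hx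
  have hcont : ContinuousOn (fun t : ℝ => a * (1 - t * x)⁻¹) (uIcc 0 1) :=
    continuousOn_const.mul (continuousOn_inv_one_sub_mul hx)
  have htilt : ContinuousOn (tiltIntegrand ν x.re |x.im|) (uIcc 0 1) := by
    rw [uIcc_of_le zero_le_one]
    exact continuousOn_tiltIntegrand ν |x.im| hx_re
  calc -(‖a‖ * tiltPotential ν (Real.tan ν))
      ≤ -(‖a‖ * ∫ t in (0 : ℝ)..1, tiltIntegrand ν x.re |x.im| t) := by
        gcongr
        exact integral_tiltIntegrand_le hν hν' hx_re (abs_nonneg _)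
    _ = ∫ t in (0 : ℝ)..1, -(‖a‖ * tiltIntegrand ν x.re |x.im| t) := by
        rw [integral_neg, integral_const_mul]
    _ ≤ ∫ t in (0 : ℝ)..1, (a * (1 - t * x)⁻¹).re :=
        integral_mono_on zero_le_one
          (continuousOn_const.mul htilt).neg.intervalIntegrable
          (continuous_re.comp_continuousOn hcont).intervalIntegrable
          fun t ht => neg_norm_mul_tiltIntegrand_le_re hx ht hre him
    _ = (a * logKernel x).re := by
        rw [logKernel, ← integral_const_mul]
        exact intervalIntegral_re hcont.intervalIntegrable

end LogKernel

section Herglotz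

variable {v : ℂ → ℂ} {w z a : ℂ} {R κ : ℝ}

theorem circleAverage_inv_one_sub_div_mul (hv : DiffContOnCl ℂ v (ball 0 R)) (hw : ‖w‖ < R) :
    Real.circleAverage (fun ζ => (1 - w / ζ)⁻¹ * v ζ) 0 R = v w := by
  have hR : 0 < R := (norm_nonneg w).trans_lt hw
  rw [← abs_of_pos hR] at hv hw
  rw [← hv.circleAverage_smul_div (mem_ball_zero_iff.2 hw)]
  refine Real.circleAverage_congr_sphere fun ζ hζ => ?_
  have hζ0 : ζ ≠ 0 := ne_of_mem_sphere hζ (abs_pos.2 hR.ne').ne'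
  simp only [sub_zero, smul_eq_mul, one_sub_div hζ0, inv_div]

theorem one_sub_conj_mul_div_sq_ne_zero (hw : ‖w‖ < R) (hz : ‖z‖ ≤ R) :
    1 - conj w * z / (R : ℂ) ^ 2 ≠ 0 := by
  have hR : 0 < R := (norm_nonneg w).trans_lt hw
  have hnorm : ‖conj w * z / (R : ℂ) ^ 2‖ < 1 := by
    simp only [norm_div, norm_mul, RCLike.norm_conj, norm_pow, norm_real, Real.norm_eq_abs, sq_abs]
    rw [div_lt_one (by positivity), sq]
    exact mul_lt_mul_of_lt_of_le_of_nonneg_of_pos hw hz (norm_nonneg w) hR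
  exact sub_ne_zero.2 fun h => by simp [← h] at hnorm

/-- On the circle `‖ζ‖ = R`, `conj (w / ζ) = conj w * ζ / R ^ 2` is analytic in `ζ`. -/
theorem circleAverage_conj_inv_one_sub_div_mul (hv : DiffContOnCl ℂ v (ball 0 R)) (hw : ‖w‖ < R) :
    Real.circleAverage (fun ζ => conj (1 - w / ζ)⁻¹ * v ζ) 0 R = v 0 := by
  have hR : 0 < R := (norm_nonneg w).trans_lt hw
  have hkernel : DiffContOnCl ℂ (fun ζ => (1 - conj w * ζ / (R : ℂ) ^ 2)⁻¹) (ball 0 R) :=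
    DiffContOnCl.inv (Differentiable.diffContOnCl (by fun_prop)) fun ζ hζ =>
      one_sub_conj_mul_div_sq_ne_zero hw
        (by simpa using closure_ball_subset_closedBall hζ)
  have hprod := hkernel.smul hv
  rw [← abs_of_pos hR] at hprod
  have hmean := hprod.circleAverage
  simp only [mul_zero, zero_div, sub_zero, inv_one, smul_eq_mul, one_mul] at hmean
  rw [← hmean]
  refine Real.circleAverage_congr_sphere fun ζ hζ => ?_
  have hζ0 : ζ ≠ 0 := ne_of_mem_sphere hζ (abs_pos.2 hR.ne').ne'
  have hconj : conj ζ ≠ 0 := (map_ne_zero _).2 hζ0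
  have hsq : ((|R| : ℝ) : ℂ) ^ 2 = ζ * conj ζ := by
    rw [mul_conj, normSq_eq_norm_sq, mem_sphere_zero_iff_norm.1 hζ, ofReal_pow]
  simp only [map_inv₀, map_sub, map_div₀, map_one, hsq]
  congr 3
  field_simp

theorem one_sub_div_ne_zero_of_mem_sphere {ζ : ℂ} (hw : ‖w‖ < R) (hζ : ζ ∈ sphere (0 : ℂ) R) :
    1 - w / ζ ≠ 0 := by
  have hζR : ‖ζ‖ = R := mem_sphere_zero_iff_norm.1 hζ
  have hζ0 : ζ ≠ 0 := norm_pos_iff.1 (hζR ▸ (norm_nonneg w).trans_lt hw)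
  rw [one_sub_div hζ0]
  exact div_ne_zero (sub_ne_zero.2 fun h => (h ▸ hζR).not_lt hw) hζ0

theorem continuousOn_inv_one_sub_div (hw : ‖w‖ < R) :
    ContinuousOn (fun ζ => (1 - w / ζ)⁻¹) (sphere 0 R) :=
  (continuousOn_const.sub (continuousOn_const.div continuousOn_id fun _ hζ =>
    ne_of_mem_sphere hζ ((norm_nonneg w).trans_lt hw).ne')).inv₀
    fun _ => one_sub_div_ne_zero_of_mem_sphere hw

theorem circleAverage_re_mul_re_inv_one_sub_div (hv : DiffContOnCl ℂ v (ball 0 R)) (hw : ‖w‖ < R)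
    (a : ℂ) (κ : ℝ) :
    Real.circleAverage (fun ζ => (v ζ).re * (2 * (a * (1 - w / ζ)⁻¹ + κ).re)) 0 R =
      (a * v w + (conj a + 2 * κ) * v 0).re := by
  have hR : 0 < R := (norm_nonneg w).trans_lt hw
  have hv_cont : ContinuousOn v (sphere 0 R) := hv.continuousOn_ball.mono sphere_subset_closedBall
  have hW := continuousOn_inv_one_sub_div hw
  have hint : CircleIntegrable (fun ζ => a * ((1 - w / ζ)⁻¹ * v ζ)) 0 R :=
    (continuousOn_const.mul (hW.mul hv_cont)).circleIntegrable hR.le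
  have hint_conj : CircleIntegrable (fun ζ => conj a * (conj (1 - w / ζ)⁻¹ * v ζ)) 0 R :=
    (continuousOn_const.mul ((continuous_conj.comp_continuousOn hW).mul hv_cont)).circleIntegrable
      hR.le
  have hint_const : CircleIntegrable (fun ζ => 2 * (κ : ℂ) * v ζ) 0 R :=
    (continuousOn_const.mul hv_cont).circleIntegrable hR.le
  have hmean : Real.circleAverage v 0 R = v 0 := by
    rw [← abs_of_pos hR] at hv
    exact hv.circleAverage
  calc _ = Real.circleAverage (reCLM ∘ ((fun ζ => a * ((1 - w / ζ)⁻¹ * v ζ)) +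
          (fun ζ => conj a * (conj (1 - w / ζ)⁻¹ * v ζ)) + fun ζ => 2 * (κ : ℂ) * v ζ)) 0 R := by
        congr 1 with ζ
        have hre : a * ((1 - w / ζ)⁻¹ * v ζ) + conj a * (conj (1 - w / ζ)⁻¹ * v ζ) +
            2 * (κ : ℂ) * v ζ = ((2 * (a * (1 - w / ζ)⁻¹ + κ).re : ℝ) : ℂ) * v ζ := by
          rw [← add_conj, map_add, map_mul, conj_ofReal]
          ring
        simp only [Function.comp_apply, Pi.add_apply]
        rw [hre, reCLM_apply, re_ofReal_mul, mul_comm]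
    _ = (a * v w + conj a * v 0 + 2 * κ * v 0).re := by
        rw [reCLM.circleAverage_comp_comm ((hint.add hint_conj).add hint_const),
          Real.circleAverage_add (hint.add hint_conj) hint_const,
          Real.circleAverage_add hint hint_conj]
        simp only [← smul_eq_mul, Real.circleAverage_fun_smul, reCLM_apply, hmean]
        simp only [smul_eq_mul, circleAverage_inv_one_sub_div_mul hv hw,
          circleAverage_conj_inv_one_sub_div_mul hv hw]
    _ = (a * v w + (conj a + 2 * κ) * v 0).re := by rw [add_assoc, ← add_mul]

theorem integral_circleAverage_swap {E : Type*} [NormedAddCommGroup E] [NormedSpace ℝ E]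
    {K : ℝ → ℂ → E} {c : ℂ} {s t : ℝ} (hR : 0 ≤ R)
    (hK : ContinuousOn (Function.uncurry K) (uIcc s t ×ˢ sphere c R)) :
    ∫ x in s..t, Real.circleAverage (K x) c R =
      Real.circleAverage (fun ζ => ∫ x in s..t, K x ζ) c R := by
  have hcont : ContinuousOn (Function.uncurry fun x θ => K x (circleMap c R θ))
      (uIcc s t ×ˢ uIcc 0 (2 * π)) :=
    hK.comp (f := fun p : ℝ × ℝ => (p.1, circleMap c R p.2)) (by fun_prop) fun p hp =>
      ⟨hp.1, circleMap_mem_sphere c hR p.2⟩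
  simp only [Real.circleAverage_def, integral_smul]
  rw [MeasureTheory.intervalIntegral_intervalIntegral_swap]
  exact (hcont.integrableOn_compact (isCompact_uIcc.prod isCompact_uIcc)).mono_set
    (prod_mono uIoc_subset_uIcc uIoc_subset_uIcc)

theorem continuousOn_inv_one_sub_ofReal_mul_div (hz : z ∈ ball 0 R) :
    ContinuousOn (fun p : ℝ × ℂ => (1 - p.1 * z / p.2)⁻¹) (uIcc 0 1 ×ˢ sphere 0 R) :=
  (continuousOn_const.sub (ContinuousOn.div (by fun_prop) (by fun_prop) fun _ hp =>
    ne_of_mem_sphere hp.2 (pos_of_mem_ball hz).ne')).inv₀ fun _ hp =>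
      one_sub_div_ne_zero_of_mem_sphere (mem_ball_zero_iff.1 (ofReal_mul_mem_ball
        (uIcc_of_le (zero_le_one' ℝ) ▸ hp.1) hz)) hp.2

theorem re_mul_integral_add {u : ℝ → ℂ} (hu : ContinuousOn u (uIcc 0 1)) (a b : ℂ) :
    (a * (∫ t in (0 : ℝ)..1, u t) + b).re = ∫ t in (0 : ℝ)..1, (a * u t + b).re := by
  have hau : ContinuousOn (fun t => a * u t) (uIcc 0 1) := continuousOn_const.mul hu
  have hint : ∫ t in (0 : ℝ)..1, (a * u t + b) = a * (∫ t in (0 : ℝ)..1, u t) + b := by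
    rw [integral_add hau.intervalIntegrable intervalIntegrable_const, integral_const_mul,
      integral_const, sub_zero, one_smul]
  rw [← hint]
  exact (intervalIntegral_re (hau.add continuousOn_const).intervalIntegrable).symm

/-- Averaged against `Re v ≥ 0` over the circle, the kernel of
`circleAverage_re_mul_re_inv_one_sub_div` gives the value of `v` at `t z`; integrating in `t` first
turns it into `logKernel`. -/
theorem re_mul_integral_ray_add_nonneg (hv : DifferentiableOn ℂ v unitDisk)
    (hpos : ∀ ζ ∈ unitDisk, 0 ≤ (v ζ).re) (hκ : ∀ x : ℂ, ‖x‖ < 1 → -κ ≤ (a * logKernel x).re)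
    (hz : z ∈ unitDisk) :
    0 ≤ (a * (∫ t in (0 : ℝ)..1, v (t * z)) + (conj a + 2 * κ) * v 0).re := by
  obtain ⟨R, hzR, hR1⟩ := exists_between (mem_ball_zero_iff.1 hz)
  rw [← mem_ball_zero_iff] at hzR
  have hR : 0 < R := pos_of_mem_ball hzR
  have hsub : closedBall (0 : ℂ) R ⊆ unitDisk := closedBall_subset_ball hR1
  have hvR : DiffContOnCl ℂ v (ball 0 R) :=
    DifferentiableOn.diffContOnCl (hv.mono (by rwa [closure_ball _ hR.ne']))
  have hv_cont : ContinuousOn v (sphere 0 R) := hvR.continuousOn_ball.mono sphere_subset_closedBall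
  have hnorm : ∀ t ∈ uIcc (0 : ℝ) 1, ‖(t : ℂ) * z‖ < R := fun t ht =>
    mem_ball_zero_iff.1 (ofReal_mul_mem_ball (uIcc_of_le (zero_le_one' ℝ) ▸ ht) hzR)
  set K : ℝ → ℂ → ℝ := fun t ζ => (v ζ).re * (2 * (a * (1 - t * z / ζ)⁻¹ + κ).re) with hK
  have hK_cont : ContinuousOn (Function.uncurry K) (uIcc 0 1 ×ˢ sphere 0 R) :=
    (continuous_re.comp_continuousOn (hv_cont.comp continuousOn_snd fun _ hp => hp.2)).mul
      (continuousOn_const.mul (continuous_re.comp_continuousOn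
        ((continuousOn_const.mul (continuousOn_inv_one_sub_ofReal_mul_div hzR)).add
          continuousOn_const)))
  have hK_nonneg : ∀ ζ ∈ sphere (0 : ℂ) R, 0 ≤ ∫ t in (0 : ℝ)..1, K t ζ := fun ζ hζ => by
    have hx : ‖z / ζ‖ < 1 := by
      rwa [norm_div, mem_sphere_zero_iff_norm.1 hζ, div_lt_one hR, ← mem_ball_zero_iff]
    simp only [hK, integral_const_mul, mul_div_assoc]
    rw [← re_mul_integral_add (continuousOn_inv_one_sub_mul hx), ← logKernel, add_re, ofReal_re]
    exact mul_nonneg (hpos ζ (hsub (sphere_subset_closedBall hζ)))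
      (mul_nonneg zero_le_two (by linarith [hκ _ hx]))
  calc 0 ≤ Real.circleAverage (fun ζ => ∫ t in (0 : ℝ)..1, K t ζ) 0 R :=
        Real.circleAverage_nonneg_of_nonneg (by rwa [abs_of_pos hR])
    _ = ∫ t in (0 : ℝ)..1, Real.circleAverage (K t) 0 R :=
        (integral_circleAverage_swap hR.le hK_cont).symm
    _ = ∫ t in (0 : ℝ)..1, (a * v (t * z) + (conj a + 2 * κ) * v 0).re :=
        integral_congr fun t ht => circleAverage_re_mul_re_inv_one_sub_div hvR (hnorm t ht) a κ
    _ = (a * (∫ t in (0 : ℝ)..1, v (t * z)) + (conj a + 2 * κ) * v 0).re :=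
        (re_mul_integral_add (continuousOn_ray hv.continuousOn hz) a _).symm

end Herglotz

section NoshiroWarschawski

/-- The **Noshiro–Warschawski theorem**. -/
theorem injOn_of_convex_of_re_deriv_pos {H H' : ℂ → ℂ} {U : Set ℂ} (hU : Convex ℝ U)
    (hH : ∀ s ∈ U, HasDerivAt H (H' s) s) (hpos : ∀ s ∈ U, 0 < (H' s).re) : InjOn H U := by
  intro a ha b hb hab
  by_contra hne
  have hmem : ∀ t ∈ Icc (0 : ℝ) 1, a + t * (b - a) ∈ U := fun t ht => by
    simpa using hU.add_smul_sub_mem ha hb ht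
  have hder : ∀ t ∈ Icc (0 : ℝ) 1, HasDerivAt
      (fun t : ℝ => (H (a + t * (b - a)) * conj (b - a)).re)
      (H' (a + t * (b - a)) * (b - a) * conj (b - a)).re t := fun t ht =>
    hasDerivAt_re (((hH _ (hmem t ht)).comp t
      ((hasDerivAt_ofReal_mul (b - a) t).const_add a)).mul_const _)
  obtain ⟨t, ht, hslope⟩ := exists_hasDerivAt_eq_slope _ _ zero_lt_one
    (fun t ht => (hder t ht).continuousAt.continuousWithinAt)
    (fun t ht => hder t (Ioo_subset_Icc_self ht))
  have hHt := hpos _ (hmem t (Ioo_subset_Icc_self ht))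
  rw [mul_assoc, mul_conj, re_mul_ofReal] at hslope
  refine (mul_pos hHt (normSq_pos.2 (sub_ne_zero.2 (Ne.symm hne)))).ne' (hslope.trans ?_)
  simp [hab]

end NoshiroWarschawski

section Starlike

variable {h : ℂ → ℂ} {z w : ℂ} {t : ℝ}

theorem dslope_zero_ne_zero (h0 : h 0 = 0) (h1 : deriv h 0 ≠ 0)
    (hstar : ∀ z ∈ unitDisk, z ≠ 0 → 0 < (z * deriv h z / h z).re) (hz : z ∈ unitDisk) :
    dslope h 0 z ≠ 0 := by
  rcases eq_or_ne z 0 with rfl | hz0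
  · rwa [dslope_same]
  · rw [dslope_of_ne _ hz0, slope_def_field, h0, sub_zero, sub_zero]
    refine div_ne_zero (fun hhz => ?_) hz0
    simpa [hhz] using hstar z hz hz0

/-- `s ↦ s + L (exp s)` is a branch of `log ∘ h ∘ exp`; its derivative is
`z * h' z / h z` at `z = exp s`. -/
theorem exists_injOn_exp_eq (hd : DifferentiableOn ℂ h unitDisk) (h0 : h 0 = 0)
    (h1 : deriv h 0 ≠ 0) (hstar : ∀ z ∈ unitDisk, z ≠ 0 → 0 < (z * deriv h z / h z).re) :
    ∃ L : ℂ → ℂ, InjOn (fun s => s + L (exp s)) {s | s.re < 0} ∧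
      ∀ s, s.re < 0 → exp (s + L (exp s)) = h (exp s) := by
  have hQ : DifferentiableOn ℂ (dslope h 0) unitDisk :=
    (differentiableOn_dslope (ball_mem_nhds 0 one_pos)).2 hd
  obtain ⟨L, -, hL⟩ := exists_hasDerivAt_exp_eq hQ
    fun z hz => dslope_zero_ne_zero h0 h1 hstar hz
  have hmem : ∀ s : ℂ, s.re < 0 → exp s ∈ unitDisk := fun s hs => by
    rwa [unitDisk, mem_ball_zero_iff, norm_exp, Real.exp_lt_one_iff]
  have hmul : ∀ z, z * dslope h 0 z = h z := fun z => by
    simpa [h0] using sub_smul_dslope h 0 z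
  have hexp : ∀ s, s.re < 0 → exp (s + L (exp s)) = h (exp s) := fun s hs => by
    rw [exp_add, (hL _ (hmem s hs)).2, hmul]
  refine ⟨L, injOn_of_convex_of_re_deriv_pos (convex_halfSpace_re_lt 0)
    (H' := fun s => exp s * deriv h (exp s) / h (exp s)) (fun s hs => ?_)
    fun s hs => hstar _ (hmem s hs) (exp_ne_zero s), hexp⟩
  have hQs : HasDerivAt (dslope h 0) (deriv (dslope h 0) (exp s)) (exp s) :=
    hQ.hasDerivAt (isOpen_ball.mem_nhds (hmem s hs))
  have hderiv : deriv h (exp s) = dslope h 0 (exp s) + exp s * deriv (dslope h 0) (exp s) := by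
    simpa only [funext hmul, one_mul] using ((hasDerivAt_id' (exp s)).fun_mul hQs).deriv
  refine ((hasDerivAt_id s).add
    ((hL _ (hmem s hs)).1.comp s (hasDerivAt_exp s))).congr_deriv ?_
  have hne := dslope_zero_ne_zero h0 h1 hstar (hmem s hs)
  rw [hderiv, ← hmul]
  field_simp [exp_ne_zero s]

theorem injOn_of_re_mul_deriv_div_pos (hd : DifferentiableOn ℂ h unitDisk) (h0 : h 0 = 0)
    (h1 : deriv h 0 ≠ 0) (hstar : ∀ z ∈ unitDisk, z ≠ 0 → 0 < (z * deriv h z / h z).re) :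
    InjOn h unitDisk := by
  obtain ⟨L, hinj, hexp⟩ := exists_injOn_exp_eq hd h0 h1 hstar
  have hlog : ∀ c ∈ unitDisk, c ≠ 0 → (log c).re < 0 := fun c hc hc0 => by
    rw [log_re]
    exact Real.log_neg (norm_pos_iff.2 hc0) (mem_ball_zero_iff.1 hc)
  have hne : ∀ c ∈ unitDisk, c ≠ 0 → h c ≠ 0 := fun c hc hc0 => by
    rw [← exp_log hc0, ← hexp _ (hlog c hc hc0)]
    exact exp_ne_zero _
  intro a ha b hb hab
  rcases eq_or_ne a 0 with rfl | ha0
  · by_contra hb0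
    exact hne b hb (Ne.symm hb0) (hab.symm.trans h0)
  rcases eq_or_ne b 0 with rfl | hb0
  · exact absurd (hab.trans h0) (hne a ha ha0)
  obtain ⟨n, hn⟩ := exp_eq_exp_iff_exists_int.1 (((hexp _ (hlog a ha ha0)).trans
    (by rw [exp_log ha0, exp_log hb0, hab])).trans (hexp _ (hlog b hb hb0)).symm)
  have hshift : exp (log b + n * (2 * π * I)) = b := by
    rw [exp_periodic.int_mul n (log b), exp_log hb0]
  have hmem : (log b + n * (2 * π * I)).re < 0 := by
    simpa using hlog b hb hb0
  have heq := hinj (hlog a ha ha0) hmem (by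
    simp only [hshift]
    rw [hn, exp_log hb0]
    ring)
  rw [← exp_log ha0, heq, hshift]

theorem eventually_exp_neg_mul_mem_image_closedBall (han : AnalyticAt ℂ h z) (hz0 : z ≠ 0)
    (hstar : 0 < (z * deriv h z / h z).re) :
    ∀ᶠ s : ℝ in 𝓝[>] 0, exp (-s) * h z ∈ h '' closedBall 0 ‖z‖ := by
  have hd0 : deriv h z ≠ 0 := fun hh => by simp [hh] at hstar
  have hstrict : HasStrictDerivAt h (deriv h z) z := han.hasStrictDerivAt
  set k := hstrict.localInverse h (deriv h z) z hd0
  have hkz : k (h z) = z := HasStrictFDerivAt.localInverse_apply_image ..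
  have hγ : HasDerivAt (fun s : ℝ => exp (-s) * h z) (-h z) 0 := by
    simpa using (ofRealCLM.hasDerivAt (x := 0)).neg.cexp.mul_const (h z)
  have hγ0 : exp (-((0 : ℝ) : ℂ)) * h z = h z := by simp
  have hk : HasDerivAt (fun s : ℝ => k (exp (-s) * h z)) ((deriv h z)⁻¹ * -h z) 0 :=
    HasDerivAt.comp (0 : ℝ) (by rw [hγ0]; exact (hstrict.to_localInverse hd0).hasDerivAt) hγ
  have hinner : ⟪k (exp (-((0 : ℝ) : ℂ)) * h z), (deriv h z)⁻¹ * -h z⟫_ℝ < 0 := by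
    have hh0 : h z ≠ 0 := fun hh => by simp [hh] at hstar
    have hmul : (deriv h z)⁻¹ * -h z * conj z =
        ((-normSq z : ℝ) : ℂ) * (z * deriv h z / h z)⁻¹ := by
      rw [ofReal_neg, ← mul_conj]
      field_simp
    rw [hγ0, hkz, Complex.inner, hmul, re_ofReal_mul, inv_re]
    exact mul_neg_of_neg_of_pos (neg_lt_zero.2 (normSq_pos.2 hz0))
      (div_pos hstar (normSq_pos.2 (div_ne_zero (mul_ne_zero hz0 hd0) hh0)))
  have hslope := (hasDerivAt_iff_tendsto_slope.1 hk.norm_sq).eventually_lt_const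
    (mul_neg_of_pos_of_neg two_pos hinner)
  filter_upwards [hslope.filter_mono (nhdsWithin_mono 0 fun s hs => ne_of_gt hs),
    nhdsWithin_le_nhds (hγ.continuousAt.eventually
      (hγ0.symm ▸ hstrict.eventually_right_inverse hd0)), self_mem_nhdsWithin] with s hs hinv hs0
  refine ⟨_, ?_, hinv⟩
  have hlt := (slope_neg_iff_of_le (le_of_lt hs0)).1 hs
  simp only [hγ0, hkz] at hlt
  exact mem_closedBall_zero_iff.2 (lt_of_pow_lt_pow_left₀ 2 (norm_nonneg z) hlt).le

theorem ofReal_mul_mem_image_of_re_mul_deriv_div_pos (hd : DifferentiableOn ℂ h unitDisk)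
    (h0 : h 0 = 0) (hstar : ∀ z ∈ unitDisk, z ≠ 0 → 0 < (z * deriv h z / h z).re)
    (hw : w ∈ h '' unitDisk) (ht : t ∈ Icc (0 : ℝ) 1) : t * w ∈ h '' unitDisk := by
  obtain ⟨z₀, hz₀, rfl⟩ := hw
  rcases eq_or_ne (h z₀) 0 with hw0 | hw0
  · exact ⟨0, zero_mem_unitDisk, by rw [h0, hw0, mul_zero]⟩
  rcases ht.1.eq_or_lt with rfl | ht0
  · exact ⟨0, zero_mem_unitDisk, by rw [h0, ofReal_zero, zero_mul]⟩
  have hsub : closedBall (0 : ℂ) ‖z₀‖ ⊆ unitDisk :=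
    closedBall_subset_ball (mem_ball_zero_iff.1 hz₀)
  set S : Set ℝ := {x | exp (-x) * h z₀ ∈ h '' closedBall 0 ‖z₀‖} with hS
  suffices hIcc : Icc 0 (-Real.log t) ⊆ S by
    have hmem := hIcc (right_mem_Icc.2 (neg_nonneg.2 (Real.log_nonpos ht.1 ht.2)))
    rw [hS, mem_ofPred_eq, ← ofReal_neg, neg_neg, ← ofReal_exp, Real.exp_log ht0] at hmem
    exact image_mono hsub hmem
  have hcomp : IsCompact (h '' closedBall 0 ‖z₀‖) :=
    (isCompact_closedBall _ _).image_of_continuousOn (hd.continuousOn.mono hsub)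
  refine IsClosed.Icc_subset_of_forall_mem_nhdsWithin
    ((hcomp.isClosed.preimage (by fun_prop)).inter isClosed_Icc) ⟨z₀, by simp⟩ ?_
  rintro x ⟨⟨z, hz, hzx⟩, -⟩
  have hz0 : z ≠ 0 := by
    rintro rfl
    exact mul_ne_zero (exp_ne_zero _) hw0 (hzx.symm.trans h0)
  have hev := eventually_exp_neg_mul_mem_image_closedBall
    (hd.analyticAt (isOpen_ball.mem_nhds (hsub hz))) hz0 (hstar z (hsub hz) hz0)
  have hshift : Tendsto (fun y : ℝ => y - x) (𝓝[>] x) (𝓝[>] 0) :=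
    tendsto_nhdsWithin_iff.2
      ⟨((continuous_sub_right x).tendsto' x 0 (sub_self x)).mono_left nhdsWithin_le_nhds,
        eventually_mem_nhdsWithin.mono fun _ hy => sub_pos.2 (mem_Ioi.1 hy)⟩
  filter_upwards [hshift.eventually hev] with y hy
  rw [hzx, ← mul_assoc, ← exp_add] at hy
  refine image_mono (closedBall_subset_closedBall (mem_closedBall_zero_iff.1 hz)) ?_
  convert hy using 3
  push_cast
  ring

end Starlike

theorem hasDerivAt_avg {f g : ℂ → ℂ} {z : ℂ} (hf : DifferentiableAt ℂ f z)
    (hg : DifferentiableAt ℂ g z) :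
    HasDerivAt (fun z => (f z + g z) / 2) ((deriv f z + deriv g z) / 2) z :=
  (hf.hasDerivAt.fun_add hg.hasDerivAt).div_const 2

namespace IsConvexOfOrder

variable {α : ℝ} {f g : ℂ → ℂ} {z : ℂ}

theorem neg_le_re_div_mul_conj (hf : IsConvexOfOrder α f) (hg : IsConvexOfOrder α g)
    (hα : 1 / 2 < α) (hz : z ∈ unitDisk) (hz0 : z ≠ 0) :
    -(2 * (1 - 2 ^ (-(2 * (1 - α)))) * tiltPotential ((1 - α) * π) (Real.tan ((1 - α) * π)) *
      ‖deriv f z‖) ≤ (g z / z * conj (deriv f z)).re := by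
  set ν := (1 - α) * π
  set δ : ℝ := 2 ^ (-(2 * (1 - α)))
  have hν0 : 0 ≤ ν := mul_nonneg (sub_nonneg.2 hf.lt_one.le) Real.pi_pos.le
  have hν2 : ν < π / 2 := by nlinarith [Real.pi_pos]
  have hcos : 0 < Real.cos ν := Real.cos_pos_of_mem_Ioo ⟨by linarith, hν2⟩
  have hsin : 0 ≤ Real.sin ν := Real.sin_nonneg_of_mem_Icc ⟨hν0, by linarith⟩
  have hre := hf.cos_mul_norm_deriv_le_re hα.le hz
  have hre0 : 0 ≤ (deriv f z).re := (mul_nonneg hcos.le (norm_nonneg _)).trans hre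
  have hδ : 1 / 2 ≤ δ := by
    rw [one_div, ← Real.rpow_neg_one]
    exact Real.rpow_le_rpow_of_exponent_le one_le_two (by linarith)
  have hdg : DifferentiableOn ℂ (deriv g) unitDisk := hg.differentiableOn.deriv isOpen_ball
  have hmean : ∫ t in (0 : ℝ)..1, (deriv g (t * z) - δ) = g z / z - δ := by
    rw [integral_sub (continuousOn_ray hdg.continuousOn hz).intervalIntegrable
      intervalIntegrable_const, integral_deriv_ray_eq_div hg.differentiableOn hg.map_zero hz hz0,
      integral_const, sub_zero, one_smul]
  have hnonneg := re_mul_integral_ray_add_nonneg (a := conj (deriv f z))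
    (κ := ‖deriv f z‖ * tiltPotential ν (Real.tan ν)) (hdg.sub_const (δ : ℂ))
    (fun ζ hζ => sub_nonneg.2 (hg.two_rpow_le_re_deriv hα.le hζ)) (fun x hx => by
      simpa only [RCLike.norm_conj] using neg_norm_mul_tiltPotential_tan_le_re_mul_logKernel
        (a := conj (deriv f z)) hx hcos hsin (by simpa using hre)
        (by simpa using hf.abs_im_deriv_le_sin_mul_norm hα.le hz)) hz
  rw [hmean, hg.deriv_zero] at hnonneg
  have hexpand : ∀ κ : ℝ, (conj (deriv f z) * (g z / z - δ) +
      (conj (conj (deriv f z)) + 2 * κ) * (1 - δ)).re =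
        (g z / z * conj (deriv f z)).re + 2 * (1 - δ) * κ - (2 * δ - 1) * (deriv f z).re := by
    intro κ
    simp only [add_re, mul_re, sub_re, conj_re, conj_im, add_im, sub_im, mul_im, ofReal_re,
      ofReal_im, one_re, one_im, re_ofNat, im_ofNat]
    ring
  rw [hexpand] at hnonneg
  nlinarith [mul_nonneg (sub_nonneg.2 (by linarith : 1 ≤ 2 * δ)) hre0]

theorem re_deriv_div_pos (hf : IsConvexOfOrder α f) (hg : IsConvexOfOrder α g) (hα : 1 / 2 < α)
    (hgap : 2 * (1 - 2 ^ (-(2 * (1 - α)))) * tiltPotential ((1 - α) * π) (Real.tan ((1 - α) * π)) <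
      (2 ^ (2 * α - 1) - 1) / (2 * α - 1)) (hz : z ∈ unitDisk) (hz0 : z ≠ 0) :
    0 < (deriv f z / (f z / z + g z / z)).re := by
  have hf_le := hf.mul_norm_deriv_le_re_div_mul_conj (by linarith)
    (fun ζ hζ hζ0 => hf.two_rpow_sub_one_div_le_re_div hα hζ hζ0) hz hz0
  have hg_le := hf.neg_le_re_div_mul_conj hg hα hz hz0
  have hpos := mul_pos (sub_pos.2 hgap) (norm_pos_iff.2 (hf.deriv_ne_zero hz))
  have hsum : 0 < ((f z / z + g z / z) * conj (deriv f z)).re := by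
    rw [add_mul, add_re]
    linarith
  have hne : f z / z + g z / z ≠ 0 := fun h => by simp [h] at hsum
  rw [div_re, ← add_div]
  refine div_pos ?_ (normSq_pos.2 hne)
  simpa [mul_re, mul_comm] using hsum

theorem re_mul_deriv_avg_div_pos (hf : IsConvexOfOrder α f) (hg : IsConvexOfOrder α g)
    (hα : 1 / 2 < α)
    (hgap : 2 * (1 - 2 ^ (-(2 * (1 - α)))) * tiltPotential ((1 - α) * π) (Real.tan ((1 - α) * π)) <
      (2 ^ (2 * α - 1) - 1) / (2 * α - 1)) (hz : z ∈ unitDisk) (hz0 : z ≠ 0) :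
    0 < (z * deriv (fun z => (f z + g z) / 2) z / ((f z + g z) / 2)).re := by
  have hsplit : z * ((deriv f z + deriv g z) / 2) / ((f z + g z) / 2) =
      deriv f z / (f z / z + g z / z) + deriv g z / (g z / z + f z / z) := by
    rw [add_comm (g z / z), ← add_div, ← add_div]
    field_simp
  have hnhds : unitDisk ∈ 𝓝 z := isOpen_ball.mem_nhds hz
  rw [(hasDerivAt_avg (hf.differentiableOn.differentiableAt hnhds)
    (hg.differentiableOn.differentiableAt hnhds)).deriv, hsplit, add_re]
  exact add_pos (hf.re_deriv_div_pos hg hα hgap hz hz0) (hg.re_deriv_div_pos hf hα hgap hz hz0)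

end IsConvexOfOrder

theorem avg_starlike_of_convexOfOrder_threeFifths_general {α : ℝ} {f g : ℂ → ℂ}
    (hf : IsConvexOfOrder α f) (hg : IsConvexOfOrder α g) (hα : 1 / 2 < α)
    (hgap : 2 * (1 - 2 ^ (-(2 * (1 - α)))) * ((1 - α) * π * Real.sin ((1 - α) * π) +
      Real.cos ((1 - α) * π) * Real.log (Real.cos ((1 - α) * π))) <
        (2 ^ (2 * α - 1) - 1) / (2 * α - 1)) :
    InjOn (fun z => (f z + g z) / 2) unitDisk ∧
      ∀ w ∈ (fun z => (f z + g z) / 2) '' unitDisk, ∀ t ∈ Icc (0 : ℝ) 1,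
        (t : ℂ) * w ∈ (fun z => (f z + g z) / 2) '' unitDisk := by
  have hd : DifferentiableOn ℂ (fun z => (f z + g z) / 2) unitDisk :=
    (hf.differentiableOn.add hg.differentiableOn).div_const 2
  have h0 : (f 0 + g 0) / 2 = 0 := by rw [hf.map_zero, hg.map_zero, add_zero, zero_div]
  have h1 : deriv (fun z => (f z + g z) / 2) 0 ≠ 0 := by
    rw [(hasDerivAt_avg (differentiableAt_of_deriv_ne_zero (hf.deriv_ne_zero zero_mem_unitDisk))
      (differentiableAt_of_deriv_ne_zero (hg.deriv_ne_zero zero_mem_unitDisk))).deriv,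
      hf.deriv_zero, hg.deriv_zero]
    norm_num
  have hν : (1 - α) * π ∈ Ioo (-(π / 2)) (π / 2) :=
    ⟨by nlinarith [hf.lt_one, Real.pi_pos], by nlinarith [Real.pi_pos]⟩
  rw [← tiltPotential_tan hν] at hgap
  have hstar : ∀ z ∈ unitDisk, z ≠ 0 →
      0 < (z * deriv (fun z => (f z + g z) / 2) z / ((f z + g z) / 2)).re :=
    fun z => hf.re_mul_deriv_avg_div_pos hg hα hgap
  exact ⟨injOn_of_re_mul_deriv_div_pos hd h0 h1 hstar, fun w hw t ht =>
    ofReal_mul_mem_image_of_re_mul_deriv_div_pos hd h0 hstar hw ht⟩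

section Numerics

theorem cos_two_pi_div_five : Real.cos (2 * π / 5) = (√5 - 1) / 4 := by
  rw [show 2 * π / 5 = 2 * (π / 5) by ring, Real.cos_two_mul, Real.cos_pi_div_five, div_pow,
    add_sq, Real.sq_sqrt (by norm_num)]
  ring

theorem tilt_two_pi_div_five_lt : 2 * π / 5 * Real.sin (2 * π / 5) +
    Real.cos (2 * π / 5) * Real.log (Real.cos (2 * π / 5)) < 0.85 := by
  have hsqrt : √5 ∈ Ioo 2.236 2.2361 :=
    ⟨(Real.lt_sqrt (by norm_num)).2 (by norm_num), (Real.sqrt_lt' (by norm_num)).2 (by norm_num)⟩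
  have hcos : Real.cos (2 * π / 5) ∈ Ioo 0.309 0.3091 := by
    rw [cos_two_pi_div_five]
    exact ⟨by linarith [hsqrt.1], by linarith [hsqrt.2]⟩
  have hsin : Real.sin (2 * π / 5) ≤ 0.952 := by
    nlinarith [Real.sin_sq_add_cos_sq (2 * π / 5), hcos.1]
  have hlog : Real.log (Real.cos (2 * π / 5)) ≤ -1.149 := by
    have hcos4 : 0 < 4 * Real.cos (2 * π / 5) := by linarith [hcos.1]
    have htangent := Real.log_le_sub_one_of_pos hcos4
    rw [Real.log_mul (by norm_num) (by linarith), show (4 : ℝ) = 2 ^ 2 by norm_num,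
      Real.log_pow] at htangent
    push_cast at htangent
    linarith [Real.log_two_gt_d9, hcos.2]
  nlinarith [Real.pi_gt_three, Real.pi_lt_d4, hcos.1]

theorem starlike_gap_three_fifths :
    2 * (1 - 2 ^ (-(2 * (1 - 3 / 5 : ℝ)))) * ((1 - 3 / 5) * π * Real.sin ((1 - 3 / 5) * π) +
      Real.cos ((1 - 3 / 5) * π) * Real.log (Real.cos ((1 - 3 / 5) * π))) <
        ((2 : ℝ) ^ (2 * (3 / 5 : ℝ) - 1) - 1) / (2 * (3 / 5) - 1) := by
  set r : ℝ := 2 ^ (1 / 5 : ℝ) with hr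
  have hr0 : 0 ≤ r := by positivity
  have hr5 : r ^ 5 = 2 := by
    rw [hr, ← Real.rpow_natCast, ← Real.rpow_mul two_pos.le]
    norm_num
  have hr_lower : 1.148 < r := lt_of_pow_lt_pow_left₀ 5 hr0 (by rw [hr5]; norm_num)
  have hr_upper : r < 2 := lt_of_pow_lt_pow_left₀ 5 two_pos.le (by rw [hr5]; norm_num)
  have hr_half : (2 : ℝ) ^ (-(2 * (1 - 3 / 5 : ℝ))) = r / 2 := by
    rw [hr, ← Real.rpow_sub_one two_ne_zero]
    norm_num
  have hr_exponent : (2 : ℝ) ^ (2 * (3 / 5 : ℝ) - 1) = r := by norm_num [hr]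
  rw [hr_half, hr_exponent, show (1 - 3 / 5) * π = 2 * π / 5 by ring]
  calc _ < 2 * (1 - r / 2) * 0.85 :=
        mul_lt_mul_of_pos_left tilt_two_pi_div_five_lt (by linarith)
    _ < (r - 1) / (1 / 5) := by linarith
    _ = _ := by norm_num

end Numerics

end

/-- if `f, g ∈ K(3/5)` then `(f+g)/2` is injective on the unit disk and
its image is starlike with respect to `0`, i.e. `(f+g)/2 ∈ S*`. -/
theorem avg_starlike_of_convexOfOrder_threeFifths (f g : ℂ → ℂ)
    (hf : IsConvexOfOrder (3 / 5) f) (hg : IsConvexOfOrder (3 / 5) g) :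
    Set.InjOn (fun z => (f z + g z) / 2) unitDisk ∧
    ∀ w ∈ (fun z => (f z + g z) / 2) '' unitDisk, ∀ t ∈ Set.Icc (0 : ℝ) 1,
      (t : ℂ) * w ∈ (fun z => (f z + g z) / 2) '' unitDisk :=
  avg_starlike_of_convexOfOrder_threeFifths_general hf hg (by norm_num) starlike_gap_three_fifths
end

section
/- For the class K(0) of normalized convex functions: (a) inf over all f ∈ K(0) and z ∈ 𝔻 \ {0} of Re(f(z)/z) equals 1/2; (b) for every t with 0 < t ≤ π, the set {Re(e^{it}·f(z)/z) : f ∈ K(0), z ∈ 𝔻 \ {0}} is not bounded below (i.e., Q_0(t) = −∞). -/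
/-!
Jack's lemma turns a bound `‖w‖ < 1` on the disk into a pointwise condition: at a first point `z₀`
where the bound fails, `z₀ w'(z₀) = k w(z₀)` with `k ≥ 1`. Writing `g(z) = f(z)/z`, this is applied
to `w = 1 - f/(z f')`, giving starlikeness of order `1/2`, and then to `w = 1 - 1/g`, giving
`Re g > 1/2` (the Marx–Strohhäcker theorem). Conversely the half-plane map `k₀(z) = 1/(1 - z) - 1`
has `k₀(z)/z = 1/(1 - z)`, so together with the identity, which contributes the value `1`, the
quotients `f(z)/z` fill exactly the half-plane `Re w > 1/2`. Both assertions are statements about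
this half-plane.
-/

open Complex Metric Set Filter Topology
open scoped ComplexOrder

lemma exists_eq_and_isMaxOn_closedBall {E : Type*} [NormedAddCommGroup E] [NormedSpace ℝ E]
    [ProperSpace E] {u : E → ℝ} {R M : ℝ} (hu : ContinuousOn u (ball 0 R)) (hu₀ : u 0 < M)
    {z₁ : E} (hz₁ : z₁ ∈ ball 0 R) (hM : M ≤ u z₁) :
    ∃ z₀ ∈ ball 0 R, u z₀ = M ∧ IsMaxOn u (closedBall 0 ‖z₀‖) z₀ := by
  have closedBall_subset {z : E} (hz : z ∈ ball 0 R) : closedBall (0 : E) ‖z‖ ⊆ ball 0 R :=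
    closedBall_subset_ball (mem_ball_zero_iff.1 hz)
  have hcompact : IsCompact (closedBall 0 ‖z₁‖ ∩ u ⁻¹' Ici M) :=
    (isCompact_closedBall _ _).of_isClosed_subset
      ((hu.mono (closedBall_subset hz₁)).preimage_isClosed_of_isClosed isClosed_closedBall
        isClosed_Ici) inter_subset_left
  obtain ⟨z₀, ⟨hz₀, hMz₀⟩, hmin⟩ := hcompact.exists_isMinOn ⟨z₁, by simp, hM⟩
    continuous_norm.continuousOn
  have hz₀R : z₀ ∈ ball 0 R := closedBall_subset hz₁ hz₀
  have hz₀_ne : z₀ ≠ 0 := by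
    rintro rfl
    exact hu₀.not_ge hMz₀
  have lt_of_mem_ball : ∀ z ∈ ball 0 ‖z₀‖, u z < M := by
    intro z hz
    rw [mem_ball_zero_iff] at hz
    by_contra! hMz
    exact hz.not_ge (hmin ⟨mem_closedBall_zero_iff.2 (hz.le.trans (mem_closedBall_zero_iff.1 hz₀)),
      hMz⟩)
  have hclosure : closure (ball (0 : E) ‖z₀‖) = closedBall 0 ‖z₀‖ :=
    closure_ball _ (norm_ne_zero_iff.2 hz₀_ne)
  have le_of_mem_closedBall : ∀ z ∈ closedBall 0 ‖z₀‖, u z ≤ M := fun z hz =>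
    le_on_closure (fun z hz => (lt_of_mem_ball z hz).le)
      (hclosure ▸ hu.mono (closedBall_subset hz₀R)) continuousOn_const (hclosure ▸ hz)
  have heq : u z₀ = M := (le_of_mem_closedBall z₀ (by simp)).antisymm hMz₀
  exact ⟨z₀, hz₀R, heq, fun z hz => (le_of_mem_closedBall z hz).trans_eq heq.symm⟩

section BoundaryDerivative

variable {p : ℂ → ℂ} {c : ℂ}

lemma im_eq_zero_of_hasDerivAt_one_of_mapsTo
    (hmaps : MapsTo p (sphere 0 1) (closedBall 0 1)) (hp₁ : p 1 = 1)
    (hc : HasDerivAt p c 1) : c.im = 0 := by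
  have hrotation : HasDerivAt (fun s : ℂ => p (exp (s * I))) (c * I) 0 := by
    have hexp : HasDerivAt (fun s : ℂ => exp (s * I)) I 0 := by
      simpa using ((hasDerivAt_id (0 : ℂ)).mul_const I).cexp
    exact HasDerivAt.comp (0 : ℂ) (by simpa using hc) hexp
  have hmax : IsLocalMax (fun s : ℝ => (p (exp (s * I))).re) 0 :=
    Eventually.of_forall fun s => by
      have hs : p (exp (s * I)) ∈ closedBall 0 1 := hmaps (by simp [norm_exp_ofReal_mul_I])
      simpa [hp₁] using (re_le_norm _).trans (mem_closedBall_zero_iff.1 hs)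
  simpa using hmax.hasDerivAt_eq_zero hrotation.real_of_complex

lemma one_le_re_of_hasDerivAt_one_of_mapsTo (hp : DifferentiableOn ℂ p (ball 0 1))
    (hmaps : MapsTo p (ball 0 1) (closedBall 0 1)) (hp₀ : p 0 = 0) (hp₁ : p 1 = 1)
    (hc : HasDerivAt p c 1) : 1 ≤ c.re := by
  have hslope : Tendsto (slope (fun s : ℝ => (p s).re) 1) (𝓝[<] 1) (𝓝 c.re) :=
    (hasDerivWithinAt_iff_tendsto_slope' self_notMem_Iio).1
      (HasDerivAt.real_of_complex hc).hasDerivWithinAt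
  refine ge_of_tendsto hslope ?_
  filter_upwards [Ioo_mem_nhdsLT one_pos] with s ⟨hs₀, hs₁⟩
  have hnorm : ‖(s : ℂ)‖ = s := by simp [hs₀.le]
  have hschwarz : ‖p s‖ ≤ ‖(s : ℂ)‖ := norm_le_norm_of_mapsTo_ball hp hmaps hp₀
    (hnorm.trans_lt hs₁)
  have hre : (p s).re ≤ s := (re_le_norm _).trans (hschwarz.trans_eq hnorm)
  rw [slope_def_field, le_div_iff_of_neg (by linarith)]
  simp only [ofReal_one, hp₁, one_re]
  linarith

end BoundaryDerivative

lemma exists_mul_deriv_eq_of_isMaxOn_norm {w : ℂ → ℂ} {z₀ : ℂ}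
    (hw : DifferentiableOn ℂ w (ball 0 ‖z₀‖)) (hwz₀ : DifferentiableAt ℂ w z₀) (hw₀ : w 0 = 0)
    (hne : w z₀ ≠ 0) (hmax : IsMaxOn (fun z => ‖w z‖) (closedBall 0 ‖z₀‖) z₀) :
    ∃ k : ℝ, 1 ≤ k ∧ z₀ * deriv w z₀ = k * w z₀ := by
  set p : ℂ → ℂ := fun ζ => w (z₀ * ζ) / w z₀ with hp
  have hz₀ : 0 < ‖z₀‖ := norm_pos_iff.2 fun h => hne (h ▸ hw₀)
  have hp_diff : DifferentiableOn ℂ p (ball 0 1) := by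
    refine (hw.comp (by fun_prop) fun ζ hζ => ?_).div_const _
    simpa [hz₀] using hζ
  have hp_maps : MapsTo p (closedBall 0 1) (closedBall 0 1) := fun ζ hζ => by
    have hmem : z₀ * ζ ∈ closedBall 0 ‖z₀‖ := by simpa [hz₀] using hζ
    simpa [hp] using div_le_one_of_le₀ (hmax hmem) (norm_nonneg _)
  have hp_deriv : HasDerivAt p (deriv w z₀ * z₀ / w z₀) 1 := by
    have hscale : HasDerivAt (fun ζ => z₀ * ζ) z₀ (1 : ℂ) := by
      simpa using (hasDerivAt_id (1 : ℂ)).const_mul z₀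
    exact (HasDerivAt.comp (1 : ℂ) (by simpa using hwz₀.hasDerivAt) hscale).div_const _
  have hp₀ : p 0 = 0 := by simp [hp, hw₀]
  have hp₁ : p 1 = 1 := by simp [hp, hne]
  have him : (deriv w z₀ * z₀ / w z₀).im = 0 := im_eq_zero_of_hasDerivAt_one_of_mapsTo
    (hp_maps.mono_left sphere_subset_closedBall) hp₁ hp_deriv
  have hre : 1 ≤ (deriv w z₀ * z₀ / w z₀).re := one_le_re_of_hasDerivAt_one_of_mapsTo hp_diff
    (hp_maps.mono_left ball_subset_closedBall) hp₀ hp₁ hp_deriv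
  refine ⟨_, hre, ?_⟩
  rw [conj_eq_iff_re.1 (conj_eq_iff_im.2 him), div_mul_cancel₀ _ hne, mul_comm]

theorem norm_lt_of_forall_mul_deriv_ne {w : ℂ → ℂ} {R M : ℝ}
    (hw : DifferentiableOn ℂ w (ball 0 R)) (hw₀ : w 0 = 0) (hM : 0 < M)
    (hne : ∀ z ∈ ball (0 : ℂ) R, ‖w z‖ = M → ∀ k : ℝ, 1 ≤ k → z * deriv w z ≠ k * w z)
    {z : ℂ} (hz : z ∈ ball 0 R) : ‖w z‖ < M := by
  by_contra! hMz
  obtain ⟨z₀, hz₀, hnorm, hmax⟩ :=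
    exists_eq_and_isMaxOn_closedBall hw.continuousOn.norm (by simpa [hw₀] using hM) hz hMz
  obtain ⟨k, hk, hkw⟩ := exists_mul_deriv_eq_of_isMaxOn_norm
    (hw.mono (ball_subset_ball (mem_ball_zero_iff.1 hz₀).le))
    (hw.differentiableAt (isOpen_ball.mem_nhds hz₀)) hw₀
    (norm_pos_iff.1 (hnorm ▸ hM)) hmax
  exact hne z₀ hz₀ hnorm k hk hkw

lemma norm_sub_one_lt_norm_iff {w : ℂ} : ‖w - 1‖ < ‖w‖ ↔ 1 / 2 < w.re := by
  rw [← sq_lt_sq₀ (norm_nonneg _) (norm_nonneg _), ← normSq_eq_norm_sq, ← normSq_eq_norm_sq,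
    normSq_sub]
  simp only [map_one, mul_one]
  constructor <;> intro h <;> linarith

lemma norm_one_sub_inv_lt_one_iff {w : ℂ} : ‖1 - w⁻¹‖ < 1 ↔ 1 / 2 < w.re := by
  rcases eq_or_ne w 0 with rfl | hw
  · norm_num
  · have hdiv : 1 - w⁻¹ = (w - 1) / w := by field_simp
    rw [← norm_sub_one_lt_norm_iff, hdiv, norm_div, div_lt_one (norm_pos_iff.2 hw)]

lemma re_nonpos_of_mul_one_sub_eq {P w : ℂ} {k : ℝ} (hw : ‖w‖ = 1) (hk : 1 ≤ k)
    (h : P * (1 - w) = 1 + k * w) : P.re ≤ 0 := by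
  have hsq : w.re * w.re + w.im * w.im = 1 := by
    rw [← normSq_apply, normSq_eq_norm_sq, hw, one_pow]
  have hne : w ≠ 1 := by
    rintro rfl
    have hre := congrArg re h
    simp only [sub_self, mul_zero, zero_re, mul_one, add_re, one_re, ofReal_re] at hre
    linarith
  have hlt : w.re < 1 := (hw ▸ re_le_norm w).lt_of_ne fun hre =>
    hne (Complex.ext hre (by simpa [hre] using hsq))
  have hre : P.re * (1 - w.re) + P.im * w.im = 1 + k * w.re := by
    simpa using congrArg re h
  have him : P.im * (1 - w.re) - P.re * w.im = k * w.im := by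
    simpa [sub_eq_neg_add] using congrArg im h
  have hP : 2 * P.re = 1 - k := mul_right_cancel₀ (sub_pos.2 hlt).ne' <| by
    linear_combination (1 - w.re) * hre - w.im * him - (P.re + k) * hsq
  linarith

lemma one_le_norm_one_sub_of_mul_eq {q v : ℂ} {k : ℝ} (hv : ‖v‖ = 1) (hk : 1 ≤ k)
    (h : q * (k * v) = (1 - q) * (1 - v)) : 1 ≤ ‖1 - q‖ := by
  have hk₀ : 0 < k := one_pos.trans_le hk
  have hle : ‖1 + ((k - 1 : ℝ) : ℂ) * v‖ ≤ k := calc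
    _ ≤ ‖(1 : ℂ)‖ + ‖((k - 1 : ℝ) : ℂ) * v‖ := norm_add_le _ _
    _ = k := by rw [norm_mul, hv, Complex.norm_of_nonneg (sub_nonneg.2 hk), norm_one]; ring
  have hfactor : (1 - q) * (1 + ((k - 1 : ℝ) : ℂ) * v) = k * v := by
    push_cast
    linear_combination -h
  refine le_of_mul_le_mul_right ?_ hk₀
  calc 1 * k = ‖(1 - q) * (1 + ((k - 1 : ℝ) : ℂ) * v)‖ := by
        rw [hfactor, norm_mul, hv, Complex.norm_of_nonneg hk₀.le, one_mul, mul_one]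
    _ ≤ ‖1 - q‖ * k := by
        rw [norm_mul]
        gcongr

lemma deriv_eq_dslope_add_smul_deriv {𝕜 E : Type*} [NontriviallyNormedField 𝕜]
    [NormedAddCommGroup E] [NormedSpace 𝕜 E] {f : 𝕜 → E} {a z : 𝕜}
    (h : DifferentiableAt 𝕜 (dslope f a) z) :
    deriv f z = dslope f a z + (z - a) • deriv (dslope f a) z := by
  have hf : f = fun z => (z - a) • dslope f a z + f a := by
    funext z
    rw [sub_smul_dslope, sub_add_cancel]
  have hderiv := ((((hasDerivAt_id' z).sub_const a).fun_smul h.hasDerivAt).add_const (f a)).deriv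
  rw [← hf, one_smul, add_comm] at hderiv
  exact hderiv

lemma dslope_zero_of_ne {f : ℂ → ℂ} (hf₀ : f 0 = 0) {z : ℂ} (hz : z ≠ 0) :
    dslope f 0 z = f z / z := by
  rw [dslope_of_ne _ hz, slope_def_field, hf₀, sub_zero, sub_zero]

/-- The quotient `f(z) / (z f'(z))` of a function vanishing at the origin, with the singularity at
`0` removed by writing `f(z) / z` as `dslope f 0 z`. The function is starlike of order
`1/2` exactly when this quotient stays within distance `1` of `1`. -/
noncomputable def starlikeRatio (f : ℂ → ℂ) (z : ℂ) : ℂ :=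
  dslope f 0 z / deriv f z

namespace IsConvexOfOrder

variable {α : ℝ} {f : ℂ → ℂ} {z : ℂ}

lemma differentiableAt_dslope (hf : IsConvexOfOrder α f) (hz : z ∈ unitDisk) :
    DifferentiableAt ℂ (dslope f 0) z :=
  ((differentiableOn_dslope (isOpen_ball.mem_nhds (mem_ball_self one_pos))).2 hf.1).differentiableAt
    (isOpen_ball.mem_nhds hz)

lemma differentiableAt_deriv (hf : IsConvexOfOrder α f) (hz : z ∈ unitDisk) :
    DifferentiableAt ℂ (deriv f) z :=
  (DifferentiableOn.deriv hf.1 isOpen_ball).differentiableAt (isOpen_ball.mem_nhds hz)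

lemma differentiableAt_starlikeRatio (hf : IsConvexOfOrder α f) (hz : z ∈ unitDisk) :
    DifferentiableAt ℂ (starlikeRatio f) z :=
  (hf.differentiableAt_dslope hz).fun_div (hf.differentiableAt_deriv hz) (hf.2.2.2 z hz).1

lemma deriv_eq (hf : IsConvexOfOrder α f) (hz : z ∈ unitDisk) :
    deriv f z = dslope f 0 z + z * deriv (dslope f 0) z := by
  simpa using deriv_eq_dslope_add_smul_deriv (hf.differentiableAt_dslope hz)

lemma mul_deriv_starlikeRatio (hf : IsConvexOfOrder α f) (hz : z ∈ unitDisk) :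
    z * deriv (starlikeRatio f) z =
      1 - (1 + z * deriv (deriv f) z / deriv f z) * starlikeRatio f z := by
  have hne : deriv f z ≠ 0 := (hf.2.2.2 z hz).1
  have hderiv : deriv (starlikeRatio f) z = _ :=
    deriv_fun_div (hf.differentiableAt_dslope hz) (hf.differentiableAt_deriv hz) hne
  rw [hderiv, starlikeRatio]
  field_simp
  linear_combination -deriv f z * hf.deriv_eq hz

lemma norm_one_sub_starlikeRatio_lt_one (hf : IsConvexOfOrder 0 f) (hz : z ∈ unitDisk) :
    ‖1 - starlikeRatio f z‖ < 1 := by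
  refine norm_lt_of_forall_mul_deriv_ne (w := fun z => 1 - starlikeRatio f z)
    (fun z hz => ((hf.differentiableAt_starlikeRatio hz).const_sub 1).differentiableWithinAt)
    (by simp [starlikeRatio, hf.2.2.1]) one_pos ?_ hz
  intro z₀ hz₀ hnorm k hk hkw
  refine (hf.2.2.2 z₀ hz₀).2.not_ge (re_nonpos_of_mul_one_sub_eq hnorm hk ?_)
  rw [deriv_const_sub] at hkw
  linear_combination hf.mul_deriv_starlikeRatio hz₀ + hkw

lemma dslope_ne_zero (hf : IsConvexOfOrder 0 f) (hz : z ∈ unitDisk) : dslope f 0 z ≠ 0 := by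
  intro h
  simpa [starlikeRatio, h] using hf.norm_one_sub_starlikeRatio_lt_one hz

lemma starlikeRatio_mul_deriv_one_sub_inv_dslope (hf : IsConvexOfOrder 0 f) (hz : z ∈ unitDisk) :
    starlikeRatio f z * (z * deriv (fun z => 1 - (dslope f 0 z)⁻¹) z) =
      (1 - starlikeRatio f z) * (1 - (1 - (dslope f 0 z)⁻¹)) := by
  have hf' : deriv f z ≠ 0 := (hf.2.2.2 z hz).1
  have hg : dslope f 0 z ≠ 0 := hf.dslope_ne_zero hz
  rw [deriv_const_sub, deriv_fun_inv'' (hf.differentiableAt_dslope hz) hg, starlikeRatio]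
  field_simp
  linear_combination -hf.deriv_eq hz

theorem one_half_lt_re_dslope (hf : IsConvexOfOrder 0 f) (hz : z ∈ unitDisk) :
    1 / 2 < (dslope f 0 z).re := by
  refine norm_one_sub_inv_lt_one_iff.1 <|
    norm_lt_of_forall_mul_deriv_ne (w := fun z => 1 - (dslope f 0 z)⁻¹)
      (fun z hz => (((hf.differentiableAt_dslope hz).fun_inv
        (hf.dslope_ne_zero hz)).const_sub 1).differentiableWithinAt)
      (by simp [hf.2.2.1]) one_pos ?_ hz
  intro z₀ hz₀ hnorm k hk hkv
  refine (hf.norm_one_sub_starlikeRatio_lt_one hz₀).not_ge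
    (one_le_norm_one_sub_of_mul_eq hnorm hk ?_)
  rw [← hkv]
  exact hf.starlikeRatio_mul_deriv_one_sub_inv_dslope hz₀

end IsConvexOfOrder

lemma isConvexOfOrder_id {α : ℝ} (hα : α < 1) : IsConvexOfOrder α id :=
  ⟨differentiableOn_id, rfl, deriv_id 0, fun z _ => by simpa [deriv_id'] using hα⟩

/-- Integer powers make the derivative formulas for `kfun 0` below hold at every `z`, including the
junk point `z = 1`. -/
lemma kfun_zero : kfun 0 = fun z => (1 - z) ^ (-1 : ℤ) - 1 := by
  funext z
  simp [kfun, cpow_neg_one]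

lemma deriv_one_sub_zpow (m : ℤ) :
    deriv (fun z : ℂ => (1 - z) ^ m) = fun z : ℂ => -((m : ℂ) * (1 - z) ^ (m - 1)) := by
  funext z
  rw [deriv_comp_const_sub (f := fun z : ℂ => z ^ m), deriv_zpow]

lemma deriv_kfun_zero : deriv (kfun 0) = fun z => (1 - z) ^ (-2 : ℤ) := by
  funext z
  rw [kfun_zero, deriv_sub_const, deriv_one_sub_zpow]
  norm_num

lemma deriv_deriv_kfun_zero : deriv (deriv (kfun 0)) = fun z => 2 * (1 - z) ^ (-3 : ℤ) := by
  rw [deriv_kfun_zero, deriv_one_sub_zpow]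
  norm_num

lemma one_sub_ne_zero_of_mem_unitDisk {z : ℂ} (hz : z ∈ unitDisk) : 1 - z ≠ 0 := by
  rw [sub_ne_zero]
  rintro rfl
  simp [unitDisk] at hz

lemma re_one_add_div_one_sub_pos {z : ℂ} (hz : z ∈ unitDisk) : 0 < ((1 + z) / (1 - z)).re := by
  have hsq : normSq z < 1 := by
    rw [normSq_eq_norm_sq]
    exact pow_lt_one₀ (norm_nonneg z) (mem_ball_zero_iff.1 hz) two_ne_zero
  have hre : ((1 + z) / (1 - z)).re = (1 - normSq z) / normSq (1 - z) := by
    rw [div_re, ← add_div, normSq_apply z]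
    congr 1
    simp only [add_re, sub_re, add_im, sub_im, one_re, one_im]
    ring
  rw [hre]
  exact div_pos (sub_pos.2 hsq) (normSq_pos.2 (one_sub_ne_zero_of_mem_unitDisk hz))

lemma isConvexOfOrder_kfun_zero : IsConvexOfOrder 0 (kfun 0) := by
  refine ⟨fun z hz => ?_, by simp [kfun_zero], by simp [deriv_kfun_zero], fun z hz => ?_⟩
  · have h := one_sub_ne_zero_of_mem_unitDisk hz
    rw [kfun_zero]
    exact (((differentiableAt_id.const_sub 1).zpow (.inl h)).sub_const 1).differentiableWithinAt
  · have h := one_sub_ne_zero_of_mem_unitDisk hz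
    rw [deriv_deriv_kfun_zero, deriv_kfun_zero]
    refine ⟨zpow_ne_zero _ h, ?_⟩
    convert re_one_add_div_one_sub_pos hz using 2
    field_simp
    ring

lemma kfun_zero_div_self {w : ℂ} (hw₀ : w ≠ 0) (hw₁ : w ≠ 1) :
    kfun 0 (1 - w⁻¹) / (1 - w⁻¹) = w := by
  have hsub : w - 1 ≠ 0 := sub_ne_zero.2 hw₁
  simp only [kfun_zero, sub_sub_cancel, zpow_neg_one, inv_inv]
  field_simp

/-- The set of values `f(z) / z` taken by the functions `f` in `K(α)` on the punctured disk;
`Q_α(t)` is the infimum of `Re(e^{it} w)` over it. -/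
def quotientValues (α : ℝ) : Set ℂ :=
  {w | ∃ f : ℂ → ℂ, IsConvexOfOrder α f ∧ ∃ z ∈ unitDisk, z ≠ 0 ∧ w = f z / z}

theorem quotientValues_zero : quotientValues 0 = {w : ℂ | 1 / 2 < w.re} := by
  ext w
  constructor
  · rintro ⟨f, hf, z, hz, hz₀, rfl⟩
    exact dslope_zero_of_ne hf.2.1 hz₀ ▸ hf.one_half_lt_re_dslope hz
  · intro hw
    rcases eq_or_ne w 1 with rfl | hw₁
    · exact ⟨id, isConvexOfOrder_id one_pos, 1 / 2, by norm_num [unitDisk], by norm_num,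
        by norm_num⟩
    · have hw₀ : w ≠ 0 := by
        rintro rfl
        norm_num at hw
      refine ⟨kfun 0, isConvexOfOrder_kfun_zero, 1 - w⁻¹,
        mem_ball_zero_iff.2 (norm_one_sub_inv_lt_one_iff.2 hw),
        sub_ne_zero.2 (inv_ne_one.2 hw₁).symm, (kfun_zero_div_self hw₀ hw₁).symm⟩

lemma setOf_eq_image_quotientValues {β : Type*} (α : ℝ) (φ : ℂ → β) :
    {x : β | ∃ f : ℂ → ℂ, IsConvexOfOrder α f ∧ ∃ z ∈ unitDisk, z ≠ 0 ∧ x = φ (f z / z)} =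
      φ '' quotientValues α := by
  ext x
  constructor
  · rintro ⟨f, hf, z, hz, hz₀, rfl⟩
    exact ⟨_, ⟨f, hf, z, hz, hz₀, rfl⟩, rfl⟩
  · rintro ⟨_, ⟨f, hf, z, hz, hz₀, rfl⟩, rfl⟩
    exact ⟨f, hf, z, hz, hz₀, rfl⟩

lemma re_image_setOf_lt_re (a : ℝ) : re '' {w : ℂ | a < w.re} = Ioi a :=
  image_preimage_eq (Ioi a) re_surjective

lemma exists_re_nonneg_and_re_mul_neg {c : ℂ} (hc : ¬ 0 ≤ c) :
    ∃ d : ℂ, 0 ≤ d.re ∧ (c * d).re < 0 := by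
  by_cases him : c.im = 0
  · have hre : c.re < 0 := by
      by_contra! hre
      exact hc (nonneg_iff.2 ⟨hre, him.symm⟩)
    exact ⟨1, by simp, by simpa using hre⟩
  · exact ⟨c.im * I, by simp, by simpa [← sq] using sq_pos_of_ne_zero him⟩

lemma not_bddBelow_re_mul_image_setOf_lt_re {c : ℂ} (hc : ¬ 0 ≤ c) (a : ℝ) :
    ¬ BddBelow ((fun w : ℂ => (c * w).re) '' {w | a < w.re}) := by
  obtain ⟨d, hd, hcd⟩ := exists_re_nonneg_and_re_mul_neg hc
  rintro ⟨b, hb⟩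
  have hray : ∀ s : ℝ, 0 ≤ s → b ≤ (c * (a + 1 : ℝ)).re + (c * d).re * s := by
    intro s hs
    have hmem : a < ((a + 1 : ℝ) + s * d : ℂ).re := by
      rw [add_re, ofReal_re, re_ofReal_mul]
      linarith [mul_nonneg hs hd]
    convert hb ⟨_, hmem, rfl⟩ using 1
    simp only [mul_add, add_re, mul_left_comm c (s : ℂ), re_ofReal_mul, mul_comm s]
  have hlim : Tendsto (fun s : ℝ => (c * (a + 1 : ℝ)).re + (c * d).re * s) atTop atBot :=
    tendsto_atBot_add_const_left _ _ (tendsto_id.const_mul_atTop_of_neg hcd)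
  obtain ⟨s, hs, hsb⟩ := ((eventually_ge_atTop 0).and (hlim.eventually_lt_atBot b)).exists
  exact hsb.not_ge (hray s hs)

lemma not_nonneg_exp_mul_I {t : ℝ} (ht : exp (t * I) ≠ 1) : ¬ 0 ≤ exp (t * I) := fun h =>
  ht (by simpa [norm_exp_ofReal_mul_I] using eq_coe_norm_of_nonneg h)

lemma exp_mul_I_ne_one {t : ℝ} (ht₀ : 0 < t) (htπ : t ≤ Real.pi) : exp (t * I) ≠ 1 := by
  intro h
  have hcos : Real.cos t < Real.cos 0 := Real.cos_lt_cos_of_nonneg_of_le_pi le_rfl htπ ht₀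
  rw [Real.cos_zero, ← exp_ofReal_mul_I_re, h, one_re] at hcos
  exact hcos.false

theorem Qzero_values_general :
    sInf {x : ℝ | ∃ f : ℂ → ℂ, IsConvexOfOrder 0 f ∧
        ∃ z ∈ unitDisk, z ≠ 0 ∧ x = (f z / z).re} = 1 / 2 ∧
    ∀ t : ℝ, exp (t * I) ≠ 1 →
      ¬ BddBelow {x : ℝ | ∃ f : ℂ → ℂ, IsConvexOfOrder 0 f ∧
        ∃ z ∈ unitDisk, z ≠ 0 ∧ x = (exp (t * I) * (f z / z)).re} := by
  refine ⟨?_, fun t ht => ?_⟩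
  · rw [setOf_eq_image_quotientValues 0 re, quotientValues_zero, re_image_setOf_lt_re, csInf_Ioi]
  · rw [setOf_eq_image_quotientValues 0 fun w => (exp (t * I) * w).re, quotientValues_zero]
    exact not_bddBelow_re_mul_image_setOf_lt_re (not_nonneg_exp_mul_I ht) _

/-- for the class `K(0)`: (a) `inf Re(f(z)/z) = 1/2`;
(b) for `0 < t ≤ π` the set of values `Re(e^{it} f(z)/z)` is not bounded below. -/
theorem Qzero_values :
    sInf {x : ℝ | ∃ f : ℂ → ℂ, IsConvexOfOrder 0 f ∧
        ∃ z ∈ unitDisk, z ≠ 0 ∧ x = (f z / z).re} = 1 / 2 ∧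
    ∀ t : ℝ, 0 < t → t ≤ Real.pi →
      ¬ BddBelow {x : ℝ | ∃ f : ℂ → ℂ, IsConvexOfOrder 0 f ∧
        ∃ z ∈ unitDisk, z ≠ 0 ∧
          x = (Complex.exp ((t : ℂ) * Complex.I) * (f z / z)).re} :=
  ⟨Qzero_values_general.1, fun t ht htπ => Qzero_values_general.2 t (exp_mul_I_ne_one ht htπ)⟩
end
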